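/- Let $\alpha = \sqrt[5]{2}$ (the real fifth root of $2$) and $K = \mathbb{Q}(\alpha)$. The only solutions of the equation $\alpha^4 X^4 - \alpha^3 X^3 + \alpha^2 X^2 - \alpha X + 1 = (\alpha^4 - \alpha^3 + \alpha^2 - \alpha + 1) Y^2$ with $X \in \mathbb{Q}$ and $Y \in K$ are $(X, Y) = (1, \pm 1)$. -/

import Mathlib

open Polynomial NumberField

theorem irreducible_X_pow_five_sub_two : Irreducible (X ^ 5 - C 2 : ℚ[X]) := by
  refine X_pow_sub_C_irreducible_of_prime (by norm_num) fun b hb => ?_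
  have h := padicValRat.pow (p := 2) (q := b) (k := 5)
  rw [hb] at h
  have h2 : padicValRat 2 (2 : ℚ) = 1 := by
    simpa using padicValRat.self (p := 2) (by norm_num)
  rw [h2] at h
  push_cast at h
  omega

theorem minpoly_fifth_root {K : Type*} [Field K] [CharZero K] {a : K} (ha : a ^ 5 = 2) :
    minpoly ℚ a = X ^ 5 - C 2 := by
  refine (minpoly.eq_of_irreducible_of_monic irreducible_X_pow_five_sub_two ?_ ?_).symm
  · simp [ha]
  · exact monic_X_pow_sub_C _ (by norm_num)

theorem isIntegral_fifth_root {K : Type*} [Field K] [NumberField K] {a : K} (ha : a ^ 5 = 2) :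
    IsIntegral ℤ a :=
  IsIntegral.of_pow (n := 5) (by norm_num) (by
    rw [ha]; simpa using (isIntegral_algebraMap (R := ℤ) (A := K) (x := 2)))

theorem minpoly_int_fifth_root {K : Type*} [Field K] [NumberField K] {a : K} (ha : a ^ 5 = 2) :
    minpoly ℤ a = X ^ 5 - C 2 := by
  have h₁ := minpoly.isIntegrallyClosed_eq_field_fractions' ℚ (isIntegral_fifth_root ha)
  rw [minpoly_fifth_root ha] at h₁
  apply map_injective (algebraMap ℤ ℚ) (algebraMap ℤ ℚ).injective_int
  rw [← h₁]
  simp [map_ofNat C 2]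

theorem fifth_root_adjoin_eq_top {K : Type*} [Field K] [NumberField K] {a : K} (ha : a ^ 5 = 2)
    (hK : Module.finrank ℚ K = 5) : Algebra.adjoin ℚ {a} = ⊤ := by
  rw [← IntermediateField.adjoin_simple_toSubalgebra_of_isAlgebraic
    (Algebra.IsAlgebraic.isAlgebraic a), (Field.primitive_element_iff_minpoly_natDegree_eq ℚ a).2,
    IntermediateField.top_toSubalgebra]
  rw [minpoly_fifth_root ha, hK, natDegree_X_pow_sub_C]

/-- The power basis generated by a fifth root of two. -/
noncomputable def fifthRootBasis {K : Type*} [Field K] [NumberField K] {a : K} (ha : a ^ 5 = 2)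
    (hK : Module.finrank ℚ K = 5) : PowerBasis ℚ K :=
  PowerBasis.ofAdjoinEqTop' (IsIntegral.tower_top (isIntegral_fifth_root ha))
    (fifth_root_adjoin_eq_top ha hK)

theorem fifthRootBasis_gen {K : Type*} [Field K] [NumberField K] {a : K} (ha : a ^ 5 = 2)
    (hK : Module.finrank ℚ K = 5) : (fifthRootBasis ha hK).gen = a :=
  PowerBasis.ofAdjoinEqTop'_gen _ _

theorem norm_fifth_root {K : Type*} [Field K] [NumberField K] {a : K} (ha : a ^ 5 = 2)
    (hK : Module.finrank ℚ K = 5) : Algebra.norm ℚ a = 2 := by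
  have h := Algebra.PowerBasis.norm_gen_eq_coeff_zero_minpoly (fifthRootBasis ha hK)
  rw [fifthRootBasis_gen, minpoly_fifth_root ha, ← PowerBasis.finrank, hK] at h
  rw [h]
  norm_num [coeff_X_pow]

theorem discr_fifthRootBasis {K : Type*} [Field K] [NumberField K] {a : K} (ha : a ^ 5 = 2)
    (hK : Module.finrank ℚ K = 5) : Algebra.discr ℚ (fifthRootBasis ha hK).basis = 50000 := by
  rw [Algebra.discr_powerBasis_eq_norm, fifthRootBasis_gen, minpoly_fifth_root ha, hK]
  have : aeval a (derivative (X ^ 5 - C 2 : ℚ[X])) = algebraMap ℚ K 5 * a ^ 4 := by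
    norm_num
  rw [this, map_mul, map_pow, norm_fifth_root ha hK, Algebra.norm_algebraMap, hK]
  norm_num

/-- The integral combination of `1, a, a², a³, a⁴` with coordinates `c`. -/
def quintic {R : Type*} [CommRing R] (a : R) (c : Fin 5 → ℤ) : R :=
  c 0 + c 1 * a + c 2 * a ^ 2 + c 3 * a ^ 3 + c 4 * a ^ 4

theorem exists_quintic_of_mem_adjoin {R : Type*} [CommRing R] {a : R} (ha : a ^ 5 = 2) {x : R}
    (hx : x ∈ Algebra.adjoin ℤ {a}) : ∃ c, x = quintic a c := by
  induction hx using Algebra.adjoin_induction with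
  | mem x hx => exact ⟨![0, 1, 0, 0, 0], by rw [Set.mem_singleton_iff.1 hx]; simp [quintic]⟩
  | algebraMap r => exact ⟨![r, 0, 0, 0, 0], by simp [quintic]⟩
  | add x y _ _ hx hy =>
    obtain ⟨c, rfl⟩ := hx
    obtain ⟨d, rfl⟩ := hy
    exact ⟨c + d, by simp [quintic]; ring⟩
  | mul x y _ _ hx hy =>
    obtain ⟨c, rfl⟩ := hx
    obtain ⟨d, rfl⟩ := hy
    refine ⟨![c 0 * d 0 + 2 * (c 1 * d 4 + c 2 * d 3 + c 3 * d 2 + c 4 * d 1),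
      c 0 * d 1 + c 1 * d 0 + 2 * (c 2 * d 4 + c 3 * d 3 + c 4 * d 2),
      c 0 * d 2 + c 1 * d 1 + c 2 * d 0 + 2 * (c 3 * d 4 + c 4 * d 3),
      c 0 * d 3 + c 1 * d 2 + c 2 * d 1 + c 3 * d 0 + 2 * (c 4 * d 4),
      c 0 * d 4 + c 1 * d 3 + c 2 * d 2 + c 3 * d 1 + c 4 * d 0], ?_⟩
    simp [quintic]
    linear_combination (c 1 * d 4 + c 2 * d 3 + c 3 * d 2 + c 4 * d 1 +
      a * (c 2 * d 4 + c 3 * d 3 + c 4 * d 2) + a ^ 2 * (c 3 * d 4 + c 4 * d 3) +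
      a ^ 3 * (c 4 * d 4)) * ha

theorem isEisensteinAt_two_fifth_root {K : Type*} [Field K] [NumberField K] {a : K}
    (ha : a ^ 5 = 2) : (minpoly ℤ a).IsEisensteinAt (Submodule.span ℤ {(2 : ℤ)}) := by
  rw [minpoly_int_fifth_root ha]
  refine Monic.isEisensteinAt_of_mem_of_notMem (monic_X_pow_sub_C _ (by norm_num)) ?_ ?_ ?_
  · simpa using (Ideal.span_singleton_eq_top (α := ℤ)).not.2 (by decide)
  · intro n hn
    rw [natDegree_X_pow_sub_C] at hn
    change _ ∈ Ideal.span {(2 : ℤ)}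
    rw [Ideal.mem_span_singleton]
    interval_cases n <;> simp [coeff_X_pow, coeff_ofNat_zero, coeff_ofNat_succ]
  · change _ ∉ (Ideal.span {(2 : ℤ)}) ^ 2
    rw [Ideal.span_singleton_pow, Ideal.mem_span_singleton]
    simp [coeff_X_pow, coeff_ofNat_zero]

theorem minpoly_int_fifth_root_sub_two {K : Type*} [Field K] [NumberField K] {a : K}
    (ha : a ^ 5 = 2) : minpoly ℤ (a - 2) =
      X ^ 5 + C 10 * X ^ 4 + C 40 * X ^ 3 + C 80 * X ^ 2 + C 80 * X + C 30 := by
  have h := minpoly.sub_algebraMap (A := ℚ) (B := K) (x := a) 2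
  rw [minpoly_fifth_root ha] at h
  have h₁ := minpoly.isIntegrallyClosed_eq_field_fractions' ℚ
    ((isIntegral_fifth_root ha).sub (isIntegral_algebraMap (R := ℤ) (A := K) (x := 2)))
  apply map_injective (algebraMap ℤ ℚ) (algebraMap ℤ ℚ).injective_int
  simp only [map_ofNat] at h h₁
  rw [← h₁, h]
  simp
  ring

theorem isEisensteinAt_five_fifth_root {K : Type*} [Field K] [NumberField K] {a : K}
    (ha : a ^ 5 = 2) : (minpoly ℤ (a - 2)).IsEisensteinAt (Submodule.span ℤ {(5 : ℤ)}) := by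
  have hd : (X ^ 5 + C 10 * X ^ 4 + C 40 * X ^ 3 + C 80 * X ^ 2 + C 80 * X + C 30 :
    ℤ[X]).natDegree = 5 := by compute_degree!
  have hm : (X ^ 5 + C 10 * X ^ 4 + C 40 * X ^ 3 + C 80 * X ^ 2 + C 80 * X + C 30 :
    ℤ[X]).Monic := by monicity!
  rw [minpoly_int_fifth_root_sub_two ha]
  refine Monic.isEisensteinAt_of_mem_of_notMem hm ?_ ?_ ?_
  · simpa using (Ideal.span_singleton_eq_top (α := ℤ)).not.2 (by decide)
  · intro n hn
    rw [hd] at hn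
    change _ ∈ Ideal.span {(5 : ℤ)}
    rw [Ideal.mem_span_singleton]
    interval_cases n <;> simp [coeff_X_pow, coeff_X, coeff_ofNat_mul, coeff_ofNat_zero,
      coeff_ofNat_succ]
  · change _ ∉ (Ideal.span {(5 : ℤ)}) ^ 2
    rw [Ideal.span_singleton_pow, Ideal.mem_span_singleton]
    simp [coeff_X_pow, coeff_ofNat_zero, coeff_ofNat_mul]

theorem mem_adjoin_of_isIntegral {K : Type*} [Field K] [NumberField K] {a : K} (ha : a ^ 5 = 2)
    (hK : Module.finrank ℚ K = 5) {x : K} (hx : IsIntegral ℤ x) : x ∈ Algebra.adjoin ℤ {a} := by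
  have hint := isIntegral_fifth_root ha
  have hint' : IsIntegral ℤ (a - 2) :=
    hint.sub (by simpa using isIntegral_algebraMap (R := ℤ) (A := K) (x := 2))
  have hadj : Algebra.adjoin ℤ {a - 2} = Algebra.adjoin ℤ {a} := by
    apply le_antisymm <;> refine Algebra.adjoin_le ?_ <;> rw [Set.singleton_subset_iff]
    · exact sub_mem (Algebra.self_mem_adjoin_singleton ℤ a) (by simp)
    · have := add_mem (Algebra.self_mem_adjoin_singleton ℤ (a - 2))
        (show (2 : K) ∈ Algebra.adjoin ℤ {a - 2} by simp)
      simpa using this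
  have hgen' : Algebra.adjoin ℚ {a - 2} = ⊤ := by
    rw [eq_top_iff, ← fifth_root_adjoin_eq_top ha hK]
    refine Algebra.adjoin_le ?_
    rw [Set.singleton_subset_iff]
    have := add_mem (Algebra.self_mem_adjoin_singleton ℚ (a - 2))
        (show (2 : K) ∈ Algebra.adjoin ℚ {a - 2} by simp)
    simpa using this
  have H := Algebra.discr_mul_isIntegral_mem_adjoin ℚ (B := fifthRootBasis ha hK)
    (by rwa [fifthRootBasis_gen]) hx
  rw [discr_fifthRootBasis, fifthRootBasis_gen] at H
  have h2 := mem_adjoin_of_smul_prime_pow_smul_of_minpoly_isEisensteinAt (R := ℤ) (p := 2) (n := 4)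
    (B := fifthRootBasis ha hK) (z := (3125 : ℤ) • x) (by norm_num)
    (by rwa [fifthRootBasis_gen]) (hx.smul _)
    (by
      rw [fifthRootBasis_gen]
      convert H using 1
      simp only [zsmul_eq_mul, Rat.smul_def]; norm_num [← mul_assoc])
    (by rw [fifthRootBasis_gen]; exact isEisensteinAt_two_fifth_root ha)
  rw [fifthRootBasis_gen, ← hadj] at h2
  let B := PowerBasis.ofAdjoinEqTop' (IsIntegral.tower_top (A := ℚ) hint') hgen'
  have hB : B.gen = a - 2 := PowerBasis.ofAdjoinEqTop'_gen _ _
  have h5 := mem_adjoin_of_smul_prime_pow_smul_of_minpoly_isEisensteinAt (R := ℤ) (p := 5) (n := 5)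
    (B := B) (z := x) (by norm_num) (by rwa [hB]) hx
    (by rw [hB]; exact h2)
    (by rw [hB]; exact isEisensteinAt_five_fifth_root ha)
  rwa [hB, hadj] at h5

theorem nrRealPlaces_eq_one_of_fifth_root {K : Type*} [Field K] [NumberField K] {a : K}
    (ha : a ^ 5 = 2) (hK : Module.finrank ℚ K = 5) : InfinitePlace.nrRealPlaces K = 1 := by
  classical
  have hpos := InfinitePlace.nrRealPlaces_pos_of_odd_finrank (K := K) (by rw [hK]; decide)
  refine le_antisymm (Fintype.card_le_one_iff_subsingleton.2 ⟨?_⟩) hpos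
  rintro ⟨v, hv⟩ ⟨w, hw⟩
  have hval (φ : K →+* ℝ) : φ a ^ 5 = 2 := by rw [← map_pow, ha, map_ofNat]
  have heq : InfinitePlace.embedding_of_isReal hv = InfinitePlace.embedding_of_isReal hw := by
    have h := (fifthRootBasis ha hK).algHom_ext
      (f := (InfinitePlace.embedding_of_isReal hv).toRatAlgHom)
      (g := (InfinitePlace.embedding_of_isReal hw).toRatAlgHom) (by
        rw [fifthRootBasis_gen]
        exact (Odd.strictMono_pow (by decide : Odd 5)).injective ((hval _).trans (hval _).symm))
    ext x
    exact DFunLike.congr_fun h x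
  have : v.embedding = w.embedding := by
    ext x
    rw [← InfinitePlace.embedding_of_isReal_apply hv, heq,
      InfinitePlace.embedding_of_isReal_apply hw]
  rw [Subtype.mk.injEq, ← InfinitePlace.mk_embedding v, this, InfinitePlace.mk_embedding]

theorem nrComplexPlaces_eq_two_of_fifth_root {K : Type*} [Field K] [NumberField K] {a : K}
    (ha : a ^ 5 = 2) (hK : Module.finrank ℚ K = 5) : InfinitePlace.nrComplexPlaces K = 2 := by
  have := InfinitePlace.card_add_two_mul_card_eq_rank K
  rw [hK, nrRealPlaces_eq_one_of_fifth_root ha hK] at this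
  omega

theorem fifthRootBasis_dim {K : Type*} [Field K] [NumberField K] {a : K} (ha : a ^ 5 = 2)
    (hK : Module.finrank ℚ K = 5) : (fifthRootBasis ha hK).dim = 5 := by
  rw [← PowerBasis.finrank, hK]

theorem exists_quintic_of_isIntegral {K : Type*} [Field K] [NumberField K] {a : K}
    (ha : a ^ 5 = 2) (hK : Module.finrank ℚ K = 5) {x : K} (hx : IsIntegral ℤ x) :
    ∃ c, x = quintic a c :=
  exists_quintic_of_mem_adjoin ha (mem_adjoin_of_isIntegral ha hK hx)

/-- The power basis generated by a fifth root of two, indexed by `Fin 5`. -/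
noncomputable def quinticBasis {K : Type*} [Field K] [NumberField K] {a : K} (ha : a ^ 5 = 2)
    (hK : Module.finrank ℚ K = 5) : Module.Basis (Fin 5) ℚ K :=
  (fifthRootBasis ha hK).basis.reindex (finCongr (fifthRootBasis_dim ha hK))

theorem quinticBasis_apply {K : Type*} [Field K] [NumberField K] {a : K} (ha : a ^ 5 = 2)
    (hK : Module.finrank ℚ K = 5) (i : Fin 5) : quinticBasis ha hK i = a ^ (i : ℕ) := by
  simp [quinticBasis, fifthRootBasis_gen]

theorem quinticBasis_repr_quintic {K : Type*} [Field K] [NumberField K] {a : K} (ha : a ^ 5 = 2)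
    (hK : Module.finrank ℚ K = 5) (c : Fin 5 → ℤ) (i : Fin 5) :
    (quinticBasis ha hK).repr (quintic a c) i = c i := by
  have : quintic a c = ∑ i, (c i : ℚ) • quinticBasis ha hK i := by
    simp [quinticBasis_apply, Fin.sum_univ_five, quintic, Rat.smul_def]
  rw [this, Module.Basis.repr_sum_self]

theorem quintic_injective {K : Type*} [Field K] [NumberField K] {a : K} (ha : a ^ 5 = 2)
    (hK : Module.finrank ℚ K = 5) : Function.Injective (quintic a) := fun c d h => by
  ext i
  have := quinticBasis_repr_quintic ha hK c i
  rw [h, quinticBasis_repr_quintic] at this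
  exact_mod_cast this.symm

theorem discr_of_fifth_root {K : Type*} [Field K] [NumberField K] {a : K} (ha : a ^ 5 = 2)
    (hK : Module.finrank ℚ K = 5) : discr K = 50000 := by
  have h : Algebra.discr ℚ (quinticBasis ha hK) = Algebra.discr ℚ (integralBasis K) := by
    refine Algebra.discr_eq_discr_of_toMatrix_coeff_isIntegral K (fun i j => ?_) fun i j => ?_
    · rw [Module.Basis.toMatrix_apply, integralBasis_apply]
      obtain ⟨c, hc⟩ := exists_quintic_of_isIntegral ha hK (RingOfIntegers.basis K j).isIntegral_coe
      rw [show algebraMap (𝓞 K) K (RingOfIntegers.basis K j) = quintic a c from hc,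
        quinticBasis_repr_quintic]
      exact isIntegral_algebraMap (R := ℤ) (x := c i)
    · rw [Module.Basis.toMatrix_apply, quinticBasis_apply]
      exact (integralBasis_repr_apply K ⟨a ^ (j : ℕ), (isIntegral_fifth_root ha).pow _⟩ i) ▸
        isIntegral_algebraMap
  rw [← coe_discr] at h
  rw [quinticBasis, Module.Basis.coe_reindex, Algebra.discr_reindex, discr_fifthRootBasis] at h
  exact_mod_cast h.symm

section RingOfIntegers

theorem coe_fifth_root {K : Type*} [Field K] {θ : 𝓞 K} (hθ : θ ^ 5 = 2) : (θ : K) ^ 5 = 2 := by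
  have := congrArg (algebraMap (𝓞 K) K) hθ
  rwa [map_pow, map_ofNat] at this

theorem coe_quintic {K : Type*} [Field K] {θ : 𝓞 K} (c : Fin 5 → ℤ) : ((quintic θ c : 𝓞 K) : K) =
    quintic (θ : K) c := by
  simp [quintic]

variable {K : Type*} [Field K] [NumberField K] {θ : 𝓞 K}

theorem exists_eq_quintic (hθ : θ ^ 5 = 2) (hK : Module.finrank ℚ K = 5) (x : 𝓞 K) :
    ∃ c, x = quintic θ c := by
  obtain ⟨c, hc⟩ := exists_quintic_of_isIntegral (coe_fifth_root hθ) hK x.isIntegral_coe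
  exact ⟨c, RingOfIntegers.coe_injective (hc.trans (coe_quintic c).symm)⟩

theorem quintic_ringOfIntegers_injective (hθ : θ ^ 5 = 2) (hK : Module.finrank ℚ K = 5) :
    Function.Injective (quintic θ) := fun c d h =>
  quintic_injective (coe_fifth_root hθ) hK (by rw [← coe_quintic, h, coe_quintic])

theorem sub_dvd_quintic_sub {R : Type*} [CommRing R] (a b : R) (c : Fin 5 → ℤ) :
    a - b ∣ quintic a c - quintic b c := by
  refine ⟨c 1 + c 2 * (a + b) + c 3 * (a ^ 2 + a * b + b ^ 2) +
    c 4 * (a ^ 3 + a ^ 2 * b + a * b ^ 2 + b ^ 3), ?_⟩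
  unfold quintic
  ring

theorem quintic_intCast {R : Type*} [CommRing R] (n : ℤ) (c : Fin 5 → ℤ) :
    quintic (n : R) c = (quintic n c : ℤ) := by
  simp [quintic]

theorem exists_int_dvd_sub (hθ : θ ^ 5 = 2) (hK : Module.finrank ℚ K = 5) {g : 𝓞 K} {n : ℤ}
    (hgn : g ∣ θ - n) (z : 𝓞 K) : ∃ m : ℤ, g ∣ z - m := by
  obtain ⟨c, rfl⟩ := exists_eq_quintic hθ hK z
  exact ⟨quintic n c, quintic_intCast (R := 𝓞 K) n c ▸ hgn.trans (sub_dvd_quintic_sub _ _ _)⟩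

theorem eq_span_of_mem (hθ : θ ^ 5 = 2) (hK : Module.finrank ℚ K = 5) {P : Ideal (𝓞 K)}
    (hP : P ≠ ⊤) {g : 𝓞 K} {p n : ℤ} (hp : Prime p) (hgp : g ∣ p) (hgn : g ∣ θ - n)
    (hg : g ∈ P) : P = Ideal.span {g} := by
  refine le_antisymm (fun z hz => ?_) ((Ideal.span_singleton_le_iff_mem P).2 hg)
  obtain ⟨m, hm⟩ := exists_int_dvd_sub hθ hK hgn z
  have hmP : (m : 𝓞 K) ∈ P := by
    have := P.sub_mem hz (P.mem_of_dvd hm hg)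
    rwa [sub_sub_cancel] at this
  rw [Ideal.mem_span_singleton]
  have hpm : p ∣ m := by
    by_contra h
    obtain ⟨u, v, huv⟩ := (hp.coprime_iff_not_dvd).2 h
    refine hP ((Ideal.eq_top_iff_one P).2 ?_)
    have : (1 : 𝓞 K) = u * p + v * m := by exact_mod_cast huv.symm
    rw [this]
    exact P.add_mem (P.mul_mem_left _ (P.mem_of_dvd hgp hg)) (P.mul_mem_left _ hmP)
  have : g ∣ m := hgp.trans (Int.cast_dvd_cast _ _ hpm)
  have := dvd_add hm this
  rwa [sub_add_cancel] at this

theorem isPrincipal_of_absNorm_le (hθ : θ ^ 5 = 2) (hK : Module.finrank ℚ K = 5)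
    {P : Ideal (𝓞 K)} (hP : P.IsPrime) (hP0 : P ≠ ⊥) (hN : Ideal.absNorm P ≤ 13) :
    Submodule.IsPrincipal P := by
  have hPt := hP.ne_top
  have : P.IsMaximal := hP.isMaximal hP0
  let _ : Field (𝓞 K ⧸ P) := Ideal.Quotient.field P
  set t : 𝓞 K ⧸ P := Ideal.Quotient.mk P θ with ht
  have ht5 : t ^ 5 = 2 := by rw [ht, ← map_pow, hθ, map_ofNat]
  have hmem (x : 𝓞 K) : x ∈ P ↔ Ideal.Quotient.mk P x = 0 := Ideal.Quotient.eq_zero_iff_mem.symm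
  have hN0 : Ideal.absNorm P ≠ 0 := Ideal.absNorm_ne_zero_iff_mem_nonZeroDivisors.2
    (mem_nonZeroDivisors_of_ne_zero hP0)
  have hN1 : Ideal.absNorm P ≠ 1 := fun h => hPt (Ideal.absNorm_eq_one_iff.1 h)
  have hNP : ((Ideal.absNorm P : ℕ) : 𝓞 K ⧸ P) = 0 := by
    have := (hmem _).1 (Ideal.absNorm_mem P)
    rwa [map_natCast] at this
  have hcard : t ^ Ideal.absNorm P = t := by
    have : Finite (𝓞 K ⧸ P) := Nat.finite_of_card_ne_zero hN0
    have := Fintype.ofFinite (𝓞 K ⧸ P)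
    have h := FiniteField.pow_card t
    rwa [← Nat.card_eq_fintype_card] at h
  have h2 (h : (2 : 𝓞 K ⧸ P) = 0) : Submodule.IsPrincipal P := by
    refine ⟨θ, eq_span_of_mem hθ hK hPt (p := 2) (n := 0) (by norm_num)
      ⟨θ ^ 4, by push_cast; rw [← hθ]; ring⟩ (by simp) ((hmem _).2 ?_)⟩
    rw [← ht5] at h
    exact pow_eq_zero_iff (by norm_num) |>.1 h
  by_cases h20 : (2 : 𝓞 K ⧸ P) = 0
  · exact h2 h20
  have h3 (h : t = -1) : Submodule.IsPrincipal P := by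
    have h' : (3 : 𝓞 K ⧸ P) = 0 := by rw [h] at ht5; linear_combination -ht5
    refine ⟨1 + θ, eq_span_of_mem hθ hK hPt (p := 3) (n := -1) (by norm_num)
      ⟨θ ^ 4 - θ ^ 3 + θ ^ 2 - θ + 1, by push_cast; linear_combination -hθ⟩
      ⟨1, by push_cast; ring⟩ ((hmem _).2 ?_)⟩
    rw [map_add, map_one, ← ht, h]
    ring
  have ht0 : t ≠ 0 := fun h => h20 (by rw [← ht5, h]; norm_num)
  have h5 (h' : (5 : 𝓞 K ⧸ P) = 0) (h : t = 2) : Submodule.IsPrincipal P := by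
    refine ⟨1 + θ ^ 2, eq_span_of_mem hθ hK hPt (p := 5) (n := 2) (by norm_num)
      ⟨1 - 2 * θ - θ ^ 2 + 2 * θ ^ 3 + θ ^ 4, by push_cast; linear_combination -(2 + θ) * hθ⟩
      ⟨θ - θ ^ 3, by push_cast; linear_combination hθ⟩ ((hmem _).2 ?_)⟩
    rw [map_add, map_one, map_pow, ← ht, h]
    linear_combination h'
  have h7 (h' : (7 : 𝓞 K ⧸ P) = 0) (h : t = 4) : Submodule.IsPrincipal P := by
    refine ⟨1 + θ + θ ^ 2, eq_span_of_mem hθ hK hPt (p := 7) (n := 4) (by norm_num)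
      ⟨3 - θ - 2 * θ ^ 2 + 3 * θ ^ 3 - θ ^ 4, by push_cast; linear_combination (θ - 2) * hθ⟩
      ⟨-2 + θ + θ ^ 2 - 2 * θ ^ 3 + θ ^ 4, by push_cast; linear_combination (1 - θ) * hθ⟩
      ((hmem _).2 ?_)⟩
    rw [map_add, map_add, map_one, map_pow, ← ht, h]
    linear_combination 3 * h'
  have h13 (h' : (13 : 𝓞 K ⧸ P) = 0) (h : t = 6) : Submodule.IsPrincipal P := by
    refine ⟨1 + θ + θ ^ 2 + θ ^ 4, eq_span_of_mem hθ hK hPt (p := 13) (n := 6) (by norm_num)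
      ⟨5 + 3 * θ - 6 * θ ^ 2 - θ ^ 3 + 2 * θ ^ 4, by
        push_cast; linear_combination (-4 + 4 * θ + θ ^ 2 - 2 * θ ^ 3) * hθ⟩
      ⟨-2 - θ + 3 * θ ^ 2 - θ ^ 4, by push_cast; linear_combination (2 - 2 * θ + θ ^ 3) * hθ⟩
      ((hmem _).2 ?_)⟩
    rw [map_add, map_add, map_add, map_one, map_pow, map_pow, ← ht, h]
    linear_combination 103 * h'
  have h1 : (1 : 𝓞 K ⧸ P) ≠ 0 := one_ne_zero
  generalize Ideal.absNorm P = N at *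
  have hcancel {x : 𝓞 K ⧸ P} (h : x * t = 0) : x = 0 := (mul_eq_zero.1 h).resolve_right ht0
  interval_cases N <;> push_cast at hNP
  · exact absurd rfl hN0
  · exact absurd rfl hN1
  · exact absurd hNP h20
  · exact h3 (by linear_combination -hcard * (1 + t ^ 2) + ht5 + hNP)
  · exact absurd (mul_self_eq_zero.1 (by linear_combination hNP)) h20
  · exact h5 hNP (by linear_combination ht5 - hcard)
  · refine absurd (hcancel (x := 1) ?_) h1
    linear_combination hcard - t * ht5
  · have h := hcancel (x := 2 * t - 1) (by linear_combination hcard - t ^ 2 * ht5)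
    exact h7 hNP (by linear_combination 4 * h - t * hNP)
  · exact absurd (pow_eq_zero_iff (n := 3) (by norm_num) |>.1 (by linear_combination hNP)) h20
  · have h30 : (3 : 𝓞 K ⧸ P) = 0 := mul_self_eq_zero.1 (by linear_combination hNP)
    have h4 : t ^ 2 - 4 = 0 := by linear_combination (t ^ 5 + 2) * ht5 - t * hcard
    exact h3 (by linear_combination ht5 - t * (t ^ 2 + 4) * h4 + (1 - 5 * t) * h30)
  · have h50 : (5 : 𝓞 K ⧸ P) = 0 := (mul_eq_zero.1 (by linear_combination hNP)).resolve_left h20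
    have h4 : t = 4 := by linear_combination (t ^ 5 + 2) * ht5 - hcard
    rw [h4] at ht5
    exact absurd (by linear_combination ht5 - 204 * h50) h20
  · have h30 := hcancel (x := 3) (by linear_combination hcard - t * (t ^ 5 + 2) * ht5)
    exact absurd (by linear_combination 4 * h30 - hNP) h1
  · have h := hcancel (x := 4 * t - 1) (by linear_combination hcard - t ^ 2 * (t ^ 5 + 2) * ht5)
    have h30 : (3 : 𝓞 K ⧸ P) = 0 := by
      have h60 : (2 : 𝓞 K ⧸ P) * 3 = 0 :=
        (mul_eq_zero.1 (by linear_combination hNP)).resolve_left h20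
      exact (mul_eq_zero.1 h60).resolve_left h20
    have h4 : t = 1 := by linear_combination h - t * h30
    rw [h4] at ht5
    exact absurd (by linear_combination -ht5) h1
  · have h := hcancel (x := 4 * t ^ 2 - 1)
      (by linear_combination hcard - t ^ 3 * (t ^ 5 + 2) * ht5)
    have h4 : t ^ 2 - 10 = 0 := by linear_combination 10 * h - 3 * t ^ 2 * hNP
    exact h13 hNP (by
      linear_combination 3 * (ht5 - t * (t ^ 2 + 10) * h4) - 23 * t * hNP)

theorem isPrincipalIdealRing_of_fifth_root (hθ : θ ^ 5 = 2) (hK : Module.finrank ℚ K = 5) :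
    IsPrincipalIdealRing (𝓞 K) := by
  refine RingOfIntegers.isPrincipalIdealRing_of_isPrincipal_of_norm_le_of_isPrime
    fun P hP hN => isPrincipal_of_absNorm_le hθ hK hP (nonZeroDivisors.coe_ne_zero P) ?_
  rw [nrComplexPlaces_eq_two_of_fifth_root (coe_fifth_root hθ) hK,
    discr_of_fifth_root (coe_fifth_root hθ) hK, hK] at hN
  suffices h : (Ideal.absNorm (P : Ideal (𝓞 K)) : ℝ) < 14 by
    exact Nat.lt_succ_iff.1 (by exact_mod_cast h)
  refine hN.trans_lt ?_
  have hs : √|((50000 : ℤ) : ℝ)| < 223.7 := by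
    rw [Real.sqrt_lt' (by norm_num)]
    norm_num
  have hpi : 4 / Real.pi < 1.2733 := by
    rw [div_lt_iff₀ Real.pi_pos]
    nlinarith [Real.pi_gt_d4]
  have hpi2 : (4 / Real.pi) ^ 2 < 1.6213 := by
    have : 0 < 4 / Real.pi := by positivity
    nlinarith
  have hs0 : 0 ≤ √|((50000 : ℤ) : ℝ)| := Real.sqrt_nonneg _
  norm_num [Nat.factorial] at hs hs0 ⊢
  nlinarith

end RingOfIntegers

section LocalRing

variable {K : Type*} [Field K] [NumberField K] {θ : 𝓞 K}

theorem mul_quintic {R : Type*} [CommRing R] {a : R} (ha : a ^ 5 = 2) (c : Fin 5 → ℤ) :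
    a * quintic a c = quintic a ![2 * c 4, c 0, c 1, c 2, c 3] := by
  simp [quintic]
  linear_combination c 4 * ha

theorem intCast_mul_quintic {R : Type*} [CommRing R] {a : R} (n : ℤ) (c : Fin 5 → ℤ) :
    n * quintic a c = quintic a (n • c) := by
  simp [quintic]
  ring

theorem dvd_of_intCast_dvd_quintic (hθ : θ ^ 5 = 2) (hK : Module.finrank ℚ K = 5) {n : ℤ}
    {c : Fin 5 → ℤ} (h : (n : 𝓞 K) ∣ quintic θ c) (i : Fin 5) : n ∣ c i := by
  obtain ⟨x, hx⟩ := h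
  obtain ⟨d, rfl⟩ := exists_eq_quintic hθ hK x
  rw [intCast_mul_quintic] at hx
  rw [quintic_ringOfIntegers_injective hθ hK hx]
  exact ⟨d i, rfl⟩

theorem dvd_of_intCast_mul_dvd_quintic (hθ : θ ^ 5 = 2) (hK : Module.finrank ℚ K = 5) {n : ℤ}
    {c : Fin 5 → ℤ} (h : (n : 𝓞 K) * θ ∣ quintic θ c) : 2 * n ∣ c 0 := by
  obtain ⟨x, hx⟩ := h
  obtain ⟨d, rfl⟩ := exists_eq_quintic hθ hK x
  rw [mul_assoc, mul_quintic hθ, intCast_mul_quintic] at hx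
  rw [quintic_ringOfIntegers_injective hθ hK hx]
  exact ⟨d 4, by simp; ring⟩

theorem not_isUnit_fifth_root (hθ : θ ^ 5 = 2) (hK : Module.finrank ℚ K = 5) : ¬ θ ∣ 1 := by
  intro h
  have := dvd_of_intCast_mul_dvd_quintic hθ hK (n := 1) (c := ![1, 0, 0, 0, 0])
    (by simpa [quintic, ← isUnit_iff_dvd_one] using h)
  norm_num at this

theorem dvd_or_dvd_sub_one (hθ : θ ^ 5 = 2) (hK : Module.finrank ℚ K = 5) (x : 𝓞 K) :
    θ ∣ x ∨ θ ∣ x - 1 := by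
  obtain ⟨m, hm⟩ := exists_int_dvd_sub hθ hK (g := θ) (n := 0) (by simp) x
  have h2 : θ ∣ 2 := ⟨θ ^ 4, by rw [← hθ]; ring⟩
  obtain ⟨k, rfl | rfl⟩ := m.even_or_odd'
  · left
    have := dvd_add hm (h2.mul_right (k : 𝓞 K))
    rwa [show x - ((2 * k : ℤ) : 𝓞 K) + 2 * k = x by push_cast; ring] at this
  · right
    have := dvd_add hm (h2.mul_right (k : 𝓞 K))
    rwa [show x - ((2 * k + 1 : ℤ) : 𝓞 K) + 2 * k = x - 1 by push_cast; ring] at this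

theorem prime_fifth_root (hθ : θ ^ 5 = 2) (hK : Module.finrank ℚ K = 5) : Prime θ := by
  refine ⟨?_, fun h => not_isUnit_fifth_root hθ hK h.dvd, fun x y h => ?_⟩
  · rintro rfl
    norm_num at hθ
  · refine (dvd_or_dvd_sub_one hθ hK x).imp_right fun hx => ?_
    have := dvd_sub h (hx.mul_right y)
    rwa [show x * y - (x - 1) * y = y by ring] at this

/-- The elements of `K` having a denominator congruent to one modulo `θ`. -/
def localSubring (θ : 𝓞 K) : Subring K where
  carrier := {x | ∃ p q : 𝓞 K, θ ∣ q - 1 ∧ x * q = p}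
  zero_mem' := ⟨0, 1, by simp, by simp⟩
  one_mem' := ⟨1, 1, by simp, by simp⟩
  neg_mem' := by
    rintro x ⟨p, q, hq, h⟩
    exact ⟨-p, q, hq, by push_cast; linear_combination -h⟩
  add_mem' := by
    rintro x y ⟨p, q, hq, h⟩ ⟨p', q', hq', h'⟩
    refine ⟨p * q' + p' * q, q * q', ?_, by push_cast; linear_combination q' * h + q * h'⟩
    have := dvd_add (hq.mul_right q') hq'
    rwa [show (q - 1) * q' + (q' - 1) = q * q' - 1 by ring] at this
  mul_mem' := by
    rintro x y ⟨p, q, hq, h⟩ ⟨p', q', hq', h'⟩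
    refine ⟨p * p', q * q', ?_, by push_cast; linear_combination p' * h + x * q * h'⟩
    have := dvd_add (hq.mul_right q') hq'
    rwa [show (q - 1) * q' + (q' - 1) = q * q' - 1 by ring] at this

/-- The inclusion of the ring of integers in the local ring at `θ`. -/
def toLocal (θ : 𝓞 K) : 𝓞 K →+* localSubring θ :=
  (algebraMap (𝓞 K) K).codRestrict (localSubring θ) fun p => ⟨p, 1, by simp, by simp⟩

@[simp] theorem coe_toLocal {K : Type*} [Field K] {θ : 𝓞 K} (x : 𝓞 K) :
    ((toLocal θ x : localSubring θ) : K) = x := rfl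

theorem toLocal_fifth_root {K : Type*} [Field K] {θ : 𝓞 K} (hθ : θ ^ 5 = 2) : toLocal θ θ ^ 5 =
    2 := by
  rw [← map_pow, hθ, map_ofNat]

theorem isUnit_toLocal (hθ : θ ^ 5 = 2) (hK : Module.finrank ℚ K = 5) {q : 𝓞 K}
    (hq : θ ∣ q - 1) : IsUnit (toLocal θ q) := by
  have hq0 : (q : K) ≠ 0 := by
    intro h
    rw [RingOfIntegers.coe_eq_zero_iff] at h
    rw [h, zero_sub, dvd_neg] at hq
    exact not_isUnit_fifth_root hθ hK hq
  have hmem : (q : K)⁻¹ ∈ localSubring θ := ⟨1, q, hq, by simp [hq0]⟩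
  exact IsUnit.of_mul_eq_one ⟨_, hmem⟩ (Subtype.ext (by simp [hq0]))

theorem pow_dvd_of_toLocal_dvd {K : Type*} [Field K] {θ : 𝓞 K} {x : 𝓞 K} {n : ℕ}
    (h : toLocal θ θ ^ n ∣ toLocal θ x) : θ ^ n ∣ x := by
  obtain ⟨⟨y, p, q, hq, hy⟩, h⟩ := h
  have h' : (x : K) = θ ^ n * y := congrArg Subtype.val h
  have hc : IsCoprime (θ ^ n) q := by
    refine IsCoprime.pow_left ?_
    obtain ⟨z, hz⟩ := hq
    exact ⟨-z, 1, by linear_combination hz⟩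
  refine hc.dvd_of_dvd_mul_right ⟨p, RingOfIntegers.coe_injective ?_⟩
  rw [map_mul, map_mul, map_pow]
  exact (congrArg (· * (q : K)) h').trans ((mul_assoc _ _ _).trans (congrArg _ hy))

theorem dvd_or_dvd_sub_one_local (hθ : θ ^ 5 = 2) (hK : Module.finrank ℚ K = 5)
    (x : localSubring θ) : toLocal θ θ ∣ x ∨ toLocal θ θ ∣ x - 1 := by
  obtain ⟨x, p, q, hq, hx⟩ := x
  have hx' : (⟨x, p, q, hq, hx⟩ : localSubring θ) * toLocal θ q = toLocal θ p := Subtype.ext hx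
  generalize (⟨x, p, q, hq, hx⟩ : localSubring θ) = y at hx' ⊢
  have hu := isUnit_toLocal hθ hK hq
  refine (dvd_or_dvd_sub_one hθ hK p).imp (fun h => ?_) fun h => ?_
  · rw [← hu.dvd_mul_right, hx']
    exact map_dvd _ h
  · rw [← hu.dvd_mul_right, sub_mul, hx', one_mul, ← map_sub]
    have := dvd_sub h hq
    rw [sub_sub_sub_cancel_right] at this
    exact map_dvd _ this

theorem not_dvd_one_local (hθ : θ ^ 5 = 2) (hK : Module.finrank ℚ K = 5) :
    ¬ toLocal θ θ ∣ 1 := fun h =>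
  not_isUnit_fifth_root hθ hK (by
    simpa using pow_dvd_of_toLocal_dvd (θ := θ) (x := 1) (n := 1) (by simpa using h))

theorem isUnit_of_dvd_sub_one (hθ : θ ^ 5 = 2) (hK : Module.finrank ℚ K = 5)
    {x : localSubring θ} (h : toLocal θ θ ∣ x - 1) : IsUnit x := by
  obtain ⟨x, p, q, hq, hx⟩ := x
  have hx' : (⟨x, p, q, hq, hx⟩ : localSubring θ) * toLocal θ q = toLocal θ p := Subtype.ext hx
  generalize (⟨x, p, q, hq, hx⟩ : localSubring θ) = y at hx' h ⊢
  have hp : θ ∣ p - 1 := by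
    simpa using pow_dvd_of_toLocal_dvd (θ := θ) (x := p - 1) (n := 1) (by
      have h₁ := dvd_add (h.mul_right (toLocal θ q)) (map_dvd (toLocal θ) hq)
      rw [pow_one]
      convert h₁ using 1
      rw [map_sub, map_sub, map_one]
      linear_combination -hx')
  have hu := isUnit_toLocal hθ hK hp
  rw [← hx'] at hu
  exact isUnit_of_mul_isUnit_left hu

theorem isUnit_iff_dvd_sub_one (hθ : θ ^ 5 = 2) (hK : Module.finrank ℚ K = 5)
    {x : localSubring θ} : IsUnit x ↔ toLocal θ θ ∣ x - 1 := by
  refine ⟨fun h => ?_, isUnit_of_dvd_sub_one hθ hK⟩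
  refine (dvd_or_dvd_sub_one_local hθ hK x).resolve_left fun h' => ?_
  exact not_dvd_one_local hθ hK (h'.trans (h.dvd))

theorem not_isUnit_iff_dvd (hθ : θ ^ 5 = 2) (hK : Module.finrank ℚ K = 5)
    {x : localSubring θ} : ¬ IsUnit x ↔ toLocal θ θ ∣ x := by
  refine ⟨fun h => ?_, fun h' h => not_dvd_one_local hθ hK (h'.trans h.dvd)⟩
  exact (dvd_or_dvd_sub_one_local hθ hK x).resolve_right fun h' =>
    h (isUnit_of_dvd_sub_one hθ hK h')

theorem prime_toLocal_fifth_root (hθ : θ ^ 5 = 2) (hK : Module.finrank ℚ K = 5) :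
    Prime (toLocal θ θ) := by
  refine ⟨?_, fun h => not_dvd_one_local hθ hK h.dvd, fun x y h => ?_⟩
  · intro h
    have := toLocal_fifth_root hθ
    rw [h] at this
    norm_num at this
  · rw [← not_isUnit_iff_dvd hθ hK] at h ⊢
    rw [← not_isUnit_iff_dvd hθ hK]
    by_contra! h'
    exact h (h'.1.mul h'.2)

theorem exists_eq_zpow_mul_unit (hθ : θ ^ 5 = 2) (hK : Module.finrank ℚ K = 5) {x : K}
    (hx : x ≠ 0) : ∃ (n : ℤ) (u : (localSubring θ)ˣ), x = (θ : K) ^ n * (u : localSubring θ) := by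
  have hprime := prime_fifth_root hθ hK
  have key (p : 𝓞 K) (hp : p ≠ 0) :
      ∃ (n : ℕ) (u : (localSubring θ)ˣ), (p : K) = (θ : K) ^ n * (u : localSubring θ) := by
    obtain ⟨n, q, hq, rfl⟩ := WfDvdMonoid.max_power_factor hp hprime.irreducible
    have hu := isUnit_toLocal hθ hK ((dvd_or_dvd_sub_one hθ hK q).resolve_left hq)
    exact ⟨n, hu.unit, by simp⟩
  obtain ⟨p, q, hq, rfl⟩ := IsFractionRing.div_surjective (A := 𝓞 K) x
  have hq0 : q ≠ 0 := nonZeroDivisors.ne_zero hq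
  have hp0 : p ≠ 0 := by
    rintro rfl
    simp at hx
  obtain ⟨m, u, hu⟩ := key p hp0
  obtain ⟨n, v, hv⟩ := key q hq0
  have hθ0 : (θ : K) ≠ 0 := RingOfIntegers.coe_ne_zero_iff.2 hprime.ne_zero
  refine ⟨m - n, u * v⁻¹, ?_⟩
  have hvv : ((v : localSubring θ) : K) * ((v⁻¹ : (localSubring θ)ˣ) : localSubring θ) = 1 :=
    congrArg Subtype.val v.mul_inv
  have hv0 := left_ne_zero_of_mul_eq_one hvv
  change (p : K) / (q : K) = _
  rw [hu, hv, zpow_sub₀ hθ0, zpow_natCast, zpow_natCast, Units.val_mul, Subring.coe_mul]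
  field_simp
  rw [hvv]

theorem mem_localSubring_of_sq_add (hθ : θ ^ 5 = 2) (hK : Module.finrank ℚ K = 5) {x : K}
    (b c : localSubring θ) (h : x ^ 2 + b * x + c = 0) : x ∈ localSubring θ := by
  by_cases hx : x = 0
  · rw [hx]
    exact zero_mem _
  obtain ⟨n, u, rfl⟩ := exists_eq_zpow_mul_unit hθ hK hx
  have hθ0 : (θ : K) ≠ 0 := RingOfIntegers.coe_ne_zero_iff.2 (prime_fifth_root hθ hK).ne_zero
  obtain ⟨m, rfl | rfl⟩ := n.eq_nat_or_neg
  · rw [zpow_natCast]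
    exact mul_mem (pow_mem (toLocal θ θ).2 m) u.1.2
  obtain rfl | m := m
  · simp
  exfalso
  set ϖ : localSubring θ := toLocal θ θ with hϖ
  have hu : (u : localSubring θ) ^ 2 = ϖ * (-ϖ ^ m * (b * u + c * ϖ ^ (m + 1))) := by
    refine Subtype.ext ?_
    rw [zpow_neg, zpow_natCast] at h
    field_simp at h
    push_cast
    rw [hϖ, coe_toLocal]
    linear_combination h
  exact not_dvd_one_local hθ hK ((Dvd.intro _ hu.symm).trans (u.isUnit.pow 2).dvd)

theorem exists_digits (hθ : θ ^ 5 = 2) (hK : Module.finrank ℚ K = 5) (x : localSubring θ) :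
    ∃ (b₀ b₁ b₂ b₃ b₄ : Bool) (y : localSubring θ),
      x = b₀.toNat + b₁.toNat * toLocal θ θ + b₂.toNat * toLocal θ θ ^ 2 +
        b₃.toNat * toLocal θ θ ^ 3 + b₄.toNat * toLocal θ θ ^ 4 + 2 * y := by
  have key (z : localSubring θ) : ∃ (b : Bool) (y : localSubring θ),
      z = b.toNat + toLocal θ θ * y := by
    obtain ⟨y, hy⟩ | ⟨y, hy⟩ := dvd_or_dvd_sub_one_local hθ hK z
    · exact ⟨false, y, by simpa using hy⟩
    · exact ⟨true, y, by rw [Bool.toNat_true, Nat.cast_one, ← hy]; ring⟩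
  obtain ⟨b₀, y₀, h₀⟩ := key x
  obtain ⟨b₁, y₁, h₁⟩ := key y₀
  obtain ⟨b₂, y₂, h₂⟩ := key y₁
  obtain ⟨b₃, y₃, h₃⟩ := key y₂
  obtain ⟨b₄, y₄, h₄⟩ := key y₃
  refine ⟨b₀, b₁, b₂, b₃, b₄, y₄, ?_⟩
  rw [h₀, h₁, h₂, h₃, h₄, ← toLocal_fifth_root hθ]
  ring

theorem exists_unit_digits (hθ : θ ^ 5 = 2) (hK : Module.finrank ℚ K = 5) {x : localSubring θ}
    (hx : IsUnit x) : ∃ (b₁ b₂ b₃ b₄ : Bool) (y : localSubring θ),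
      x = 1 + b₁.toNat * toLocal θ θ + b₂.toNat * toLocal θ θ ^ 2 +
        b₃.toNat * toLocal θ θ ^ 3 + b₄.toNat * toLocal θ θ ^ 4 + 2 * y := by
  obtain ⟨b₀, b₁, b₂, b₃, b₄, y, h⟩ := exists_digits hθ hK x
  obtain rfl | rfl := b₀.eq_false_or_eq_true.symm
  · refine absurd hx ((not_isUnit_iff_dvd hθ hK).2 ⟨b₁.toNat + b₂.toNat * toLocal θ θ +
      b₃.toNat * toLocal θ θ ^ 2 + b₄.toNat * toLocal θ θ ^ 3 + toLocal θ θ ^ 4 * y, ?_⟩)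
    rw [h, ← toLocal_fifth_root hθ, Bool.toNat_false]
    push_cast
    ring
  · exact ⟨b₁, b₂, b₃, b₄, y, by simpa using h⟩

end LocalRing

/-- Natural number coordinates on the powers of a fifth root of two. -/
structure QuinticNat where
  (c0 c1 c2 c3 c4 : ℕ)

namespace QuinticNat

/-- Multiplication of coordinates, reduced modulo `8`. -/
def mul (a b : QuinticNat) : QuinticNat where
  c0 := (a.c0 * b.c0 + 2 * (a.c1 * b.c4 + a.c2 * b.c3 + a.c3 * b.c2 + a.c4 * b.c1)) % 8
  c1 := (a.c0 * b.c1 + a.c1 * b.c0 + 2 * (a.c2 * b.c4 + a.c3 * b.c3 + a.c4 * b.c2)) % 8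
  c2 := (a.c0 * b.c2 + a.c1 * b.c1 + a.c2 * b.c0 + 2 * (a.c3 * b.c4 + a.c4 * b.c3)) % 8
  c3 := (a.c0 * b.c3 + a.c1 * b.c2 + a.c2 * b.c1 + a.c3 * b.c0 + 2 * (a.c4 * b.c4)) % 8
  c4 := (a.c0 * b.c4 + a.c1 * b.c3 + a.c2 * b.c2 + a.c3 * b.c1 + a.c4 * b.c0) % 8

def add (x y : QuinticNat) : QuinticNat :=
  ⟨x.c0 + y.c0, x.c1 + y.c1, x.c2 + y.c2, x.c3 + y.c3, x.c4 + y.c4⟩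

def ofBool (b : Bool) (x : QuinticNat) : QuinticNat := bif b then x else ⟨1, 0, 0, 0, 0⟩

/-- The coordinates modulo `8` of `t ^ 4 - t ^ 3 + t ^ 2 - t + 1`. -/
def delta : QuinticNat := ⟨1, 7, 1, 7, 1⟩

/-- The coordinates modulo `8` of a product of square class representatives. -/
def rep (s0 s1 s2 s3 s4 : Bool) : QuinticNat :=
  mul (mul (mul (mul (ofBool s0 ⟨7, 0, 0, 0, 0⟩) (ofBool s1 ⟨7, 1, 0, 0, 0⟩))
    (ofBool s2 ⟨7, 0, 1, 1, 0⟩)) (ofBool s3 delta)) (ofBool s4 ⟨1, 0, 1, 0, 0⟩)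

def digits (d0 d1 d2 d3 d4 : Bool) : QuinticNat :=
  ⟨d0.toNat, d1.toNat, d2.toNat, d3.toNat, d4.toNat⟩

def sq (x : QuinticNat) : QuinticNat := mul x x

/-- Congruence modulo `4` times the fifth root. -/
def Eqv (x y : QuinticNat) : Bool :=
  x.c0 % 8 == y.c0 % 8 && x.c1 % 4 == y.c1 % 4 && x.c2 % 4 == y.c2 % 4 && x.c3 % 4 == y.c3 % 4 &&
    x.c4 % 4 == y.c4 % 4

/-- Congruence modulo `4`. -/
def Eqv4 (x y : QuinticNat) : Bool :=
  x.c0 % 4 == y.c0 % 4 && x.c1 % 4 == y.c1 % 4 && x.c2 % 4 == y.c2 % 4 && x.c3 % 4 == y.c3 % 4 &&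
    x.c4 % 4 == y.c4 % 4

set_option maxRecDepth 100000 in
theorem eq_false_of_eqv_sq : ∀ s0 s1 s2 s3 s4 d1 d2 d3 d4 : Bool,
    Eqv (rep s0 s1 s2 s3 s4) (sq (digits true d1 d2 d3 d4)) = true →
      s0 = false ∧ s1 = false ∧ s2 = false ∧ s3 = false ∧ s4 = false := by
  decide +kernel

/-- The congruence `b ^ 2 + e ^ 2 = b + b * e` modulo `4`. -/
def QuadEqv (b e : QuinticNat) : Bool := Eqv4 (add (sq b) (sq e)) (add b (mul b e))

set_option maxRecDepth 100000 in
theorem quadEqv_eq_false : ∀ s0 s1 s2 s3 s4 d1 d2 d3 d4 e2 e3 e4 : Bool,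
    QuadEqv (mul (rep s0 s1 s2 s3 s4) (sq (digits true d1 d2 d3 d4)))
      (mul delta (sq (digits false true e2 e3 e4))) = false := by
  decide +kernel

section Eval

variable {S : Type*} [CommRing S] {t : S}

def eval (t : S) (x : QuinticNat) : S :=
  x.c0 + x.c1 * t + x.c2 * t ^ 2 + x.c3 * t ^ 3 + x.c4 * t ^ 4

theorem cast_mod_eight (h8 : (8 : S) = 0) (n : ℕ) : ((n % 8 : ℕ) : S) = n := by
  conv_rhs => rw [← Nat.div_add_mod n 8]
  push_cast
  rw [h8]
  ring

theorem eval_mul (ht : t ^ 5 = 2) (h8 : (8 : S) = 0) (x y : QuinticNat) :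
    eval t (mul x y) = eval t x * eval t y := by
  simp only [eval, mul, cast_mod_eight h8]
  push_cast
  linear_combination -(x.c1 * y.c4 + x.c2 * y.c3 + x.c3 * y.c2 + x.c4 * y.c1 +
    (x.c2 * y.c4 + x.c3 * y.c3 + x.c4 * y.c2) * t + (x.c3 * y.c4 + x.c4 * y.c3) * t ^ 2 +
    x.c4 * y.c4 * t ^ 3 : S) * ht

theorem eval_add (x y : QuinticNat) : eval t (add x y) = eval t x + eval t y := by
  simp only [eval, add]
  push_cast
  ring

theorem eval_sq (ht : t ^ 5 = 2) (h8 : (8 : S) = 0) (x : QuinticNat) :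
    eval t (sq x) = eval t x ^ 2 := by
  rw [sq, eval_mul ht h8, pow_two]

theorem eval_ofBool (b : Bool) (x : QuinticNat) : eval t (ofBool b x) = eval t x ^ b.toNat := by
  cases b <;> simp [ofBool, eval]

theorem map_eval {S' : Type*} [CommRing S'] (f : S →+* S') (x : QuinticNat) :
    f (eval t x) = eval (f t) x := by
  simp [eval]

/-- The coordinates as integers. -/
def toFun (x : QuinticNat) : Fin 5 → ℤ := ![x.c0, x.c1, x.c2, x.c3, x.c4]

theorem eval_eq_quintic (x : QuinticNat) : eval t x = quintic t x.toFun := by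
  simp [eval, quintic, toFun]

end Eval

end QuinticNat

/-- A monomial in `-1`, two units, and the primes above `3` and `5` of `ℤ[a]` where `a ^ 5 = 2`. -/
def classRep {R : Type*} [CommRing R] (a : R) (s : Fin 5 → ℕ) : R :=
  (-1) ^ s 0 * (a - 1) ^ s 1 * (a ^ 3 + a ^ 2 - 1) ^ s 2 *
    (a ^ 4 - a ^ 3 + a ^ 2 - a + 1) ^ s 3 * (1 + a ^ 2) ^ s 4

theorem map_classRep {R S : Type*} [CommRing R] [CommRing S] (f : R →+* S) (a : R)
    (s : Fin 5 → ℕ) : f (classRep a s) = classRep (f a) s := by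
  simp [classRep]

theorem classRep_add {R : Type*} [CommRing R] (a : R) (s t : Fin 5 → ℕ) :
    classRep a (s + t) = classRep a s * classRep a t := by
  simp only [classRep, Pi.add_apply]
  ring

theorem classRep_eq_mul_sq {R : Type*} [CommRing R] (a : R) (s : Fin 5 → ℕ) :
    classRep a s =
      classRep a (fun i => (s i).bodd.toNat) * classRep a (fun i => (s i).div2) ^ 2 := by
  rw [pow_two, ← classRep_add, ← classRep_add]
  congr 1
  funext i
  have := Nat.bodd_add_div2 (s i)
  simp only [Pi.add_apply]
  lia

theorem eval_rep {S : Type*} [CommRing S] {t : S} (ht : t ^ 5 = 2) (h8 : (8 : S) = 0)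
    (b : Fin 5 → Bool) :
    QuinticNat.eval t (QuinticNat.rep (b 0) (b 1) (b 2) (b 3) (b 4)) =
      classRep t fun i => (b i).toNat := by
  have h7 : (7 : S) = -1 := by linear_combination h8
  simp only [QuinticNat.rep, QuinticNat.eval_mul ht h8, QuinticNat.eval_ofBool, classRep]
  simp only [QuinticNat.eval, QuinticNat.delta]
  push_cast
  rw [h7]
  ring

section LocalSquares

variable {K : Type*} [Field K] [NumberField K] {θ : 𝓞 K}

theorem isUnit_toLocal_classRep (hθ : θ ^ 5 = 2) (hK : Module.finrank ℚ K = 5) (s : Fin 5 → ℕ) :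
    IsUnit (toLocal θ (classRep θ s)) := by
  simp only [classRep, map_mul, map_pow]
  have key (q : 𝓞 K) (n : ℕ) (h : θ ∣ q - 1) : IsUnit (toLocal θ q ^ n) :=
    (isUnit_toLocal hθ hK h).pow n
  refine ((((key _ _ ?_).mul (key _ _ ?_)).mul (key _ _ ?_)).mul (key _ _ ?_)).mul (key _ _ ?_)
  · exact ⟨-θ ^ 4, by linear_combination hθ⟩
  · exact ⟨1 - θ ^ 4, by linear_combination hθ⟩
  · exact ⟨θ ^ 2 + θ - θ ^ 4, by linear_combination hθ⟩
  · exact ⟨θ ^ 3 - θ ^ 2 + θ - 1, by ring⟩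
  · exact ⟨θ, by ring⟩

theorem pow_eleven_dvd_sq_sub_sq (hθ : θ ^ 5 = 2) (hK : Module.finrank ℚ K = 5)
    {x y z : localSubring θ} (hx : x = y + 2 * z) (hu : IsUnit x) :
    toLocal θ θ ^ 11 ∣ x ^ 2 - y ^ 2 := by
  have h5 := toLocal_fifth_root hθ
  have hx1 := (isUnit_iff_dvd_sub_one hθ hK).1 hu
  have h : toLocal θ θ ∣ z * (x - z) := by
    obtain hz | hz := dvd_or_dvd_sub_one_local hθ hK z
    · exact hz.mul_right _
    · have := dvd_sub hx1 hz
      rw [sub_sub_sub_cancel_right] at this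
      exact this.mul_left _
  have h' : x ^ 2 - y ^ 2 = toLocal θ θ ^ 10 * (z * (x - z)) := by
    rw [hx]
    linear_combination -(z * (y + z)) * (toLocal θ θ ^ 5 + 2) * h5
  rw [h', pow_succ]
  exact mul_dvd_mul_left _ h

theorem quintic_sub {R : Type*} [CommRing R] (a : R) (c d : Fin 5 → ℤ) :
    quintic a (c - d) = quintic a c - quintic a d := by
  simp [quintic]
  ring

theorem eqv_of_dvd_eval_sub (hθ : θ ^ 5 = 2) (hK : Module.finrank ℚ K = 5) {x y : QuinticNat}
    (h : toLocal θ θ ^ 11 ∣ QuinticNat.eval (toLocal θ θ) x - QuinticNat.eval (toLocal θ θ) y) :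
    QuinticNat.Eqv x y = true := by
  rw [← QuinticNat.map_eval, ← QuinticNat.map_eval, ← map_sub] at h
  replace h := pow_dvd_of_toLocal_dvd h
  rw [QuinticNat.eval_eq_quintic, QuinticNat.eval_eq_quintic, ← quintic_sub,
    show θ ^ 11 = (4 : ℤ) * θ by push_cast; linear_combination θ * (θ ^ 5 + 2) * hθ] at h
  have h8 := dvd_of_intCast_mul_dvd_quintic hθ hK h
  have h4 := dvd_of_intCast_dvd_quintic hθ hK ((Dvd.intro _ rfl).trans h)
  have h41 := h4 1
  have h42 := h4 2
  have h43 := h4 3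
  have h44 := h4 4
  simp [QuinticNat.toFun] at h8 h41 h42 h43 h44
  simp only [QuinticNat.Eqv, Bool.and_eq_true, beq_iff_eq]
  lia

theorem eqv4_of_dvd_eval_sub (hθ : θ ^ 5 = 2) (hK : Module.finrank ℚ K = 5) {x y : QuinticNat}
    (h : toLocal θ θ ^ 10 ∣ QuinticNat.eval (toLocal θ θ) x - QuinticNat.eval (toLocal θ θ) y) :
    QuinticNat.Eqv4 x y = true := by
  rw [← QuinticNat.map_eval, ← QuinticNat.map_eval, ← map_sub] at h
  replace h := pow_dvd_of_toLocal_dvd h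
  rw [QuinticNat.eval_eq_quintic, QuinticNat.eval_eq_quintic, ← quintic_sub,
    show θ ^ 10 = (4 : ℤ) by push_cast; linear_combination (θ ^ 5 + 2) * hθ] at h
  have h4 := dvd_of_intCast_dvd_quintic hθ hK h
  have h40 := h4 0
  have h41 := h4 1
  have h42 := h4 2
  have h43 := h4 3
  have h44 := h4 4
  simp [QuinticNat.toFun] at h40 h41 h42 h43 h44
  simp only [QuinticNat.Eqv4, Bool.and_eq_true, beq_iff_eq]
  lia

theorem even_of_dvd_classRep_sub_sq (hθ : θ ^ 5 = 2) (hK : Module.finrank ℚ K = 5)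
    {s : Fin 5 → ℕ} {u : localSubring θ} (hu : IsUnit u)
    (h : toLocal θ θ ^ 11 ∣ toLocal θ (classRep θ s) - u ^ 2) (i : Fin 5) : Even (s i) := by
  obtain ⟨w, hw⟩ := isUnit_toLocal_classRep hθ hK fun i => (s i).div2
  obtain ⟨v, rfl⟩ := hu
  rw [classRep_eq_mul_sq, map_mul, map_pow, ← hw] at h
  have hw1 : (w : localSubring θ) * (w⁻¹ : (localSubring θ)ˣ) = 1 := w.mul_inv
  obtain ⟨d₁, d₂, d₃, d₄, y, hy⟩ := exists_unit_digits hθ hK (v * w⁻¹).isUnit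
  have h₂ := pow_eleven_dvd_sq_sub_sq hθ hK hy (v * w⁻¹).isUnit
  have h₃ := dvd_add (h.mul_right ((w⁻¹ : (localSubring θ)ˣ) ^ 2)) h₂
  set ϖ := toLocal θ θ
  have hϖ : ϖ ^ 5 = 2 := toLocal_fifth_root hθ
  obtain ⟨I, hI⟩ : ∃ I : Ideal (localSubring θ), ∀ x, x ∈ I ↔ ϖ ^ 11 ∣ x :=
    ⟨Ideal.span {ϖ ^ 11}, fun x => Ideal.mem_span_singleton⟩
  let π := Ideal.Quotient.mk I
  have hπ : π (ϖ ^ 11) = 0 := Ideal.Quotient.eq_zero_iff_mem.2 ((hI _).2 dvd_rfl)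
  have ht : π ϖ ^ 5 = 2 := by rw [← map_pow, hϖ, map_ofNat]
  have h8 : (8 : localSubring θ ⧸ I) = 0 := by
    rw [map_pow] at hπ
    linear_combination π ϖ ^ 4 * hπ - (π ϖ ^ 10 + 2 * π ϖ ^ 5 + 4) * ht
  let b (i : Fin 5) := (s i).bodd
  have key : π (QuinticNat.eval ϖ (QuinticNat.rep (b 0) (b 1) (b 2) (b 3) (b 4))) =
      π (QuinticNat.eval ϖ (QuinticNat.sq (QuinticNat.digits true d₁ d₂ d₃ d₄))) := by
    rw [QuinticNat.map_eval, QuinticNat.map_eval, eval_rep ht h8, QuinticNat.eval_sq ht h8,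
      ← QuinticNat.map_eval, ← map_classRep, ← map_pow, Ideal.Quotient.mk_eq_mk_iff_sub_mem, hI]
    convert h₃ using 1
    rw [map_classRep, Units.val_mul]
    simp only [QuinticNat.eval, QuinticNat.digits, Bool.toNat_true, Nat.cast_one]
    linear_combination -classRep ϖ (fun i => (b i).toNat) * (w * (w⁻¹ : (localSubring θ)ˣ) + 1) *
        hw1
  rw [Ideal.Quotient.mk_eq_mk_iff_sub_mem, hI] at key
  have hb := QuinticNat.eq_false_of_eqv_sq _ _ _ _ _ _ _ _ _ (eqv_of_dvd_eval_sub hθ hK key)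
  rw [Nat.even_iff, Nat.mod_two_of_bodd]
  fin_cases i <;> simp [hb, b]

theorem not_dvd_classRep_quadratic (hθ : θ ^ 5 = 2) (hK : Module.finrank ℚ K = 5)
    {s : Fin 5 → ℕ} {u v D : localSubring θ} (hu : IsUnit u) (hv : IsUnit v)
    (hD : D = toLocal θ (θ ^ 4 - θ ^ 3 + θ ^ 2 - θ + 1) * (toLocal θ θ * v) ^ 2)
    {B : localSubring θ} (hB : B = toLocal θ (classRep θ s) * u ^ 2) :
    ¬ toLocal θ θ ^ 10 ∣ B ^ 2 + D ^ 2 - (B + B * D) := by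
  intro h
  have hw := isUnit_toLocal_classRep hθ hK fun i => (s i).div2
  obtain ⟨d₁, d₂, d₃, d₄, y, hy⟩ := exists_unit_digits hθ hK (hw.mul hu)
  obtain ⟨e₂, e₃, e₄, e₅, z, hz⟩ := exists_unit_digits hθ hK hv
  rw [classRep_eq_mul_sq, map_mul, map_pow] at hB
  generalize toLocal θ (classRep θ fun i => (s i).div2) = w at hB hy
  set ϖ := toLocal θ θ with hϖ'
  have hϖ : ϖ ^ 5 = 2 := toLocal_fifth_root hθ
  obtain ⟨I, hI⟩ : ∃ I : Ideal (localSubring θ), ∀ x, x ∈ I ↔ ϖ ^ 10 ∣ x :=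
    ⟨Ideal.span {ϖ ^ 10}, fun x => Ideal.mem_span_singleton⟩
  let π := Ideal.Quotient.mk I
  have hπ : π (ϖ ^ 10) = 0 := Ideal.Quotient.eq_zero_iff_mem.2 ((hI _).2 dvd_rfl)
  have ht : π ϖ ^ 5 = 2 := by rw [← map_pow, hϖ, map_ofNat]
  have h4 : (4 : localSubring θ ⧸ I) = 0 := by
    rw [map_pow] at hπ
    linear_combination hπ - (π ϖ ^ 5 + 2) * ht
  have h8 : (8 : localSubring θ ⧸ I) = 0 := by linear_combination 2 * h4
  let b (i : Fin 5) := (s i).bodd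
  let E := QuinticNat.mul QuinticNat.delta
    (QuinticNat.sq (QuinticNat.digits false true e₂ e₃ e₄))
  let F := QuinticNat.mul (QuinticNat.rep (b 0) (b 1) (b 2) (b 3) (b 4))
    (QuinticNat.sq (QuinticNat.digits true d₁ d₂ d₃ d₄))
  have hE : π D = QuinticNat.eval (π ϖ) E := by
    have hδ : π (toLocal θ (θ ^ 4 - θ ^ 3 + θ ^ 2 - θ + 1)) =
        QuinticNat.eval (π ϖ) QuinticNat.delta := by
      simp only [QuinticNat.eval, QuinticNat.delta, map_add, map_sub, map_pow, map_one, ← hϖ']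
      push_cast
      linear_combination (-(π ϖ) - π ϖ ^ 3) * h8
    have hv' : π (ϖ * v) = QuinticNat.eval (π ϖ) (QuinticNat.digits false true e₂ e₃ e₄) +
        2 * (e₅.toNat + π ϖ * π z) := by
      rw [hz]
      simp only [QuinticNat.eval, QuinticNat.digits, map_add, map_mul, map_pow, map_one,
        map_natCast, map_ofNat, Bool.toNat_true, Bool.toNat_false]
      push_cast
      linear_combination e₅.toNat * ht
    rw [hD, map_mul, map_pow, hδ, hv', QuinticNat.eval_mul ht h8, QuinticNat.eval_sq ht h8]
    generalize QuinticNat.eval (π ϖ) (QuinticNat.digits false true e₂ e₃ e₄) = a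
    linear_combination QuinticNat.eval (π ϖ) QuinticNat.delta *
      (a * (e₅.toNat + π ϖ * π z) + (e₅.toNat + π ϖ * π z) ^ 2) * h4
  have hF : π B = QuinticNat.eval (π ϖ) F := by
    have hv' : π (w * u) = QuinticNat.eval (π ϖ) (QuinticNat.digits true d₁ d₂ d₃ d₄) +
        2 * π y := by
      rw [hy]
      simp only [QuinticNat.eval, QuinticNat.digits, map_add, map_mul, map_pow, map_one,
        map_natCast, map_ofNat, Bool.toNat_true]
      push_cast
      ring
    rw [hB, mul_assoc, ← mul_pow, map_mul, map_pow, hv', QuinticNat.eval_mul ht h8,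
      QuinticNat.eval_sq ht h8, eval_rep ht h8, map_classRep, map_classRep]
    generalize QuinticNat.eval (π ϖ) (QuinticNat.digits true d₁ d₂ d₃ d₄) = a
    linear_combination classRep (π ϖ) (fun i => (b i).toNat) * (a * π y + π y ^ 2) * h4
  have key : π (QuinticNat.eval ϖ (QuinticNat.add (QuinticNat.sq F) (QuinticNat.sq E))) =
      π (QuinticNat.eval ϖ (QuinticNat.add F (QuinticNat.mul F E))) := by
    rw [QuinticNat.map_eval, QuinticNat.map_eval, QuinticNat.eval_add, QuinticNat.eval_add,
      QuinticNat.eval_sq ht h8, QuinticNat.eval_sq ht h8, QuinticNat.eval_mul ht h8 F E, ← hE, ← hF,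
      ← map_pow, ← map_pow, ← map_mul, ← map_add, ← map_add,
      Ideal.Quotient.mk_eq_mk_iff_sub_mem, hI]
    exact h
  rw [Ideal.Quotient.mk_eq_mk_iff_sub_mem, hI] at key
  have := QuinticNat.quadEqv_eq_false (b 0) (b 1) (b 2) (b 3) (b 4) d₁ d₂ d₃ d₄ e₂ e₃ e₄
  rw [QuinticNat.QuadEqv, eqv4_of_dvd_eval_sub hθ hK key] at this
  contradiction

end LocalSquares

theorem NumberField.exists_units_class {K : Type*} [Field K] [NumberField K]
    (h : Odd (Module.finrank ℚ K)) :
    ∃ φ : (𝓞 K)ˣ → Bool × (Fin (Units.rank K) → ZMod 2),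
      ∀ x y, φ x = φ y → ∃ w, x = y * w ^ 2 := by
  classical
  choose f hf _ using Units.exist_unique_eq_mul_prod K
  refine ⟨fun x => (decide (((f x).1 : (𝓞 K)ˣ) = 1), fun i => ((f x).2 i : ZMod 2)),
    fun x y hxy => ?_⟩
  simp only [Prod.mk.injEq, decide_eq_decide] at hxy
  have h₁ : ((f x).1 : (𝓞 K)ˣ) = (f y).1 := by
    obtain h1 | h1 := Units.torsion_eq_one_or_neg_one_of_odd_finrank h (f x).1
    · rw [h1, hxy.1.1 h1]
    · obtain h2 | h2 := Units.torsion_eq_one_or_neg_one_of_odd_finrank h (f y).1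
      · rw [h2, hxy.1.2 h2]
      · rw [h1, h2]
  have h₂ (i) : ∃ k, (f x).2 i = (f y).2 i + 2 * k := by
    have := congrFun hxy.2 i
    simp only [ZMod.intCast_eq_intCast_iff_dvd_sub] at this
    obtain ⟨k, hk⟩ := this
    push_cast at hk
    exact ⟨-k, by linear_combination -hk⟩
  choose k hk using h₂
  refine ⟨∏ i, Units.fundSystem K i ^ k i, ?_⟩
  have hx : x = _ := hf x
  have hy : y = _ := hf y
  conv_lhs => rw [hx]
  conv_rhs => rw [hy]
  rw [h₁, mul_assoc, ← Finset.prod_pow, ← Finset.prod_mul_distrib]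
  congr 1
  refine Finset.prod_congr rfl fun i _ => ?_
  rw [hk, zpow_add, mul_comm 2, zpow_mul]
  rfl

section UnitsAndPrimes

variable {K : Type*} [Field K] [NumberField K] {θ : 𝓞 K}

theorem isUnit_classRep {K : Type*} [Field K] {θ : 𝓞 K} (hθ : θ ^ 5 = 2) (a b c : ℕ) :
    IsUnit (classRep θ ![a, b, c, 0, 0]) := by
  have h₁ : IsUnit (θ - 1) :=
    IsUnit.of_mul_eq_one (1 + θ + θ ^ 2 + θ ^ 3 + θ ^ 4) (by linear_combination hθ)
  have h₂ : IsUnit (θ ^ 3 + θ ^ 2 - 1) :=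
    IsUnit.of_mul_eq_one (-1 + θ ^ 2 - θ ^ 3 + θ ^ 4) (by linear_combination θ ^ 2 * hθ)
  simpa [classRep] using (((isUnit_one (M := 𝓞 K)).neg.pow a).mul (h₁.pow b)).mul (h₂.pow c)

theorem even_of_classRep_eq_sq (hθ : θ ^ 5 = 2) (hK : Module.finrank ℚ K = 5) {s : Fin 5 → ℕ}
    {u : 𝓞 K} (h : classRep θ s = u ^ 2) (i : Fin 5) : Even (s i) := by
  refine even_of_dvd_classRep_sub_sq hθ hK (u := toLocal θ u) ?_ ?_ i
  · rw [← isUnit_pow_iff two_ne_zero, ← map_pow, ← h]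
    exact isUnit_toLocal_classRep hθ hK s
  · rw [h, map_pow, sub_self]
    exact dvd_zero _

theorem exists_eq_classRep_mul_sq_of_isUnit (hθ : θ ^ 5 = 2) (hK : Module.finrank ℚ K = 5)
    {u : 𝓞 K} (hu : IsUnit u) : ∃ s w, u = classRep θ s * w ^ 2 := by
  obtain ⟨φ, hφ⟩ := exists_units_class (K := K) (by rw [hK]; decide)
  have hrank : Units.rank K = 2 := by
    rw [Units.rank, InfinitePlace.card_eq_nrRealPlaces_add_nrComplexPlaces,
      nrRealPlaces_eq_one_of_fifth_root (coe_fifth_root hθ) hK,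
      nrComplexPlaces_eq_two_of_fifth_root (coe_fifth_root hθ) hK]
  let e (b : Bool × Bool × Bool) : Fin 5 → ℕ := ![b.1.toNat, b.2.1.toNat, b.2.2.toNat, 0, 0]
  let g (b : Bool × Bool × Bool) : (𝓞 K)ˣ :=
    (isUnit_classRep hθ b.1.toNat b.2.1.toNat b.2.2.toNat).unit
  have hg (b) : (g b : 𝓞 K) = classRep θ (e b) := rfl
  have hinj : Function.Injective fun b => φ (g b) := by
    intro b b' h
    obtain ⟨w, hw⟩ := hφ _ _ h
    replace hw := congrArg (fun z : (𝓞 K)ˣ => (z : 𝓞 K)) hw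
    simp only [Units.val_mul, Units.val_pow_eq_pow_val, hg] at hw
    have := even_of_classRep_eq_sq hθ hK (s := e b + e b') (u := classRep θ (e b') * w)
      (by rw [classRep_add, hw]; ring)
    have h0 := this 0
    have h1 := this 1
    have h2 := this 2
    obtain ⟨b0, b1, b2⟩ := b
    obtain ⟨c0, c1, c2⟩ := b'
    simp [e] at h0 h1 h2
    revert h0 h1 h2
    clear * -
    revert b0 b1 b2 c0 c1 c2
    decide
  have hbij : Function.Bijective fun b => φ (g b) := by
    refine (Fintype.bijective_iff_injective_and_card _).2 ⟨hinj, ?_⟩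
    simp [hrank]
  obtain ⟨b, hb⟩ := hbij.2 (φ hu.unit)
  obtain ⟨w, hw⟩ := hφ _ _ hb.symm
  exact ⟨e b, w, congrArg (fun z : (𝓞 K)ˣ => (z : 𝓞 K)) hw⟩

theorem prime_one_add_sq (hθ : θ ^ 5 = 2) (hK : Module.finrank ℚ K = 5) : Prime (1 + θ ^ 2) := by
  have h5 : (1 + θ ^ 2) * (1 - 2 * θ - θ ^ 2 + 2 * θ ^ 3 + θ ^ 4) = 5 := by
    linear_combination (2 + θ) * hθ
  have h5' : (1 + θ ^ 2) ^ 5 = 5 * (1 + 4 * θ + θ ^ 2 + 2 * θ ^ 3 + 2 * θ ^ 4) := by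
    linear_combination (10 * θ + 5 * θ ^ 3 + θ ^ 5 + 2) * hθ
  have hu : ¬ IsUnit (1 + θ ^ 2) := by
    intro h
    have := isUnit_of_mul_isUnit_left (h5' ▸ h.pow 5)
    have := dvd_of_intCast_dvd_quintic hθ hK (n := 5) (c := ![1, 0, 0, 0, 0])
      (by simpa [quintic, ← isUnit_iff_dvd_one] using this) 0
    norm_num at this
  obtain ⟨M, hM, hgM⟩ := exists_max_ideal_of_mem_nonunits hu
  have hspan := eq_span_of_mem hθ hK hM.ne_top (p := 5) (n := 2) (by norm_num)
    ⟨_, by push_cast; exact h5.symm⟩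
    ⟨θ - θ ^ 3, by push_cast; linear_combination hθ⟩ hgM
  rw [← Ideal.span_singleton_prime, ← hspan]
  · exact hM.isPrime
  · intro h
    rw [h, zero_mul] at h5
    norm_num at h5

theorem absNorm_dvd_of_mem (hθ : θ ^ 5 = 2) (hK : Module.finrank ℚ K = 5) {I : Ideal (𝓞 K)}
    (h : θ ^ 4 - θ ^ 3 + θ ^ 2 - θ + 1 ∈ I) : Ideal.absNorm I ∣ 243 := by
  have h3 : ((3 : ℕ) : 𝓞 K) ∈ I := by
    have := I.mul_mem_left (1 + θ) h
    rwa [show (1 + θ) * (θ ^ 4 - θ ^ 3 + θ ^ 2 - θ + 1) = (3 : ℕ) by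
      push_cast; linear_combination hθ] at this
  have := Ideal.absNorm_dvd_absNorm_of_le ((Ideal.span_singleton_le_iff_mem I).2 h3)
  rwa [Ideal.absNorm_span_natCast, RingOfIntegers.rank, hK] at this

theorem absNorm_eq_of_mem (hθ : θ ^ 5 = 2) (hK : Module.finrank ℚ K = 5) {M : Ideal (𝓞 K)}
    (hM : M.IsMaximal) (h : θ ^ 4 - θ ^ 3 + θ ^ 2 - θ + 1 ∈ M) : Ideal.absNorm M = 81 := by
  let _ : Field (𝓞 K ⧸ M) := Ideal.Quotient.field M
  have hN := absNorm_dvd_of_mem hθ hK h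
  set t : 𝓞 K ⧸ M := Ideal.Quotient.mk M θ with ht
  have ht5 : t ^ 5 = 2 := by rw [ht, ← map_pow, hθ, map_ofNat]
  have htd : t ^ 4 - t ^ 3 + t ^ 2 - t + 1 = 0 := by
    have := Ideal.Quotient.eq_zero_iff_mem.2 h
    simpa using this
  have h3 : (3 : 𝓞 K ⧸ M) = 0 := by linear_combination (1 + t) * htd - ht5
  have hN0 : Ideal.absNorm M ≠ 0 := fun h0 => by simp [h0] at hN
  have hcard : t ^ Ideal.absNorm M = t := by
    have : Finite (𝓞 K ⧸ M) := Nat.finite_of_card_ne_zero hN0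
    have := Fintype.ofFinite (𝓞 K ⧸ M)
    have h := FiniteField.pow_card t
    rwa [← Nat.card_eq_fintype_card] at h
  have hN1 : Ideal.absNorm M ≠ 1 := fun h => hM.ne_top (Ideal.absNorm_eq_one_iff.1 h)
  have h1 : (1 : 𝓞 K ⧸ M) ≠ 0 := one_ne_zero
  have ht0 : t ≠ 0 := by
    intro h0
    rw [h0] at htd
    exact h1 (by linear_combination htd)
  have hcancel {x : 𝓞 K ⧸ M} (h : x * t = 0) : x = 0 := (mul_eq_zero.1 h).resolve_right ht0
  have hsq : t ^ 2 - 1 ≠ 0 := by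
    intro h2
    exact h1 (hcancel (by linear_combination htd - (t ^ 2 - t + 2) * h2 - (1 - t) * h3))
  have h10 : t ^ 10 = 1 := by linear_combination (t ^ 5 + 2) * ht5 + h3
  generalize Ideal.absNorm M = N at *
  rw [show 243 = 3 ^ 5 by norm_num, Nat.dvd_prime_pow Nat.prime_three] at hN
  obtain ⟨k, hk, rfl⟩ := hN
  interval_cases k
  · exact absurd rfl hN1
  · exact absurd (hcancel (by linear_combination hcard)) hsq
  · exact absurd (hcancel (by linear_combination t * h10 - t ^ 2 * hcard)) hsq
  · have h4 : t ^ 4 = 1 := by linear_combination -t ^ 3 * hcard + (t ^ 20 + t ^ 10 + 1) * h10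
    exact absurd (by linear_combination h10 - t ^ 2 * (t ^ 4 + 1) * h4) hsq
  · rfl
  · have h240 : (t ^ 10) ^ 24 = 1 := by rw [h10, one_pow]
    exact absurd (hcancel (by linear_combination hcard - t ^ 3 * h240)) hsq

theorem prime_alternating_sum (hθ : θ ^ 5 = 2) (hK : Module.finrank ℚ K = 5) :
    Prime (θ ^ 4 - θ ^ 3 + θ ^ 2 - θ + 1) := by
  have := isPrincipalIdealRing_of_fifth_root hθ hK
  have key {x : 𝓞 K} (hx : ¬ IsUnit x) (hxd : x ∣ θ ^ 4 - θ ^ 3 + θ ^ 2 - θ + 1) :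
      81 ∣ Ideal.absNorm (Ideal.span {x}) := by
    obtain ⟨M, hM, hxM⟩ := exists_max_ideal_of_mem_nonunits hx
    rw [← absNorm_eq_of_mem hθ hK hM (M.mem_of_dvd hxd hxM)]
    exact Ideal.absNorm_dvd_absNorm_of_le ((Ideal.span_singleton_le_iff_mem M).2 hxM)
  refine Irreducible.prime (irreducible_iff.2 ⟨fun h => ?_, fun x y hxy => ?_⟩)
  · have h3 : (3 : 𝓞 K) ∣ 1 + θ :=
      (h.dvd_mul_right).1 ⟨1, by linear_combination hθ⟩
    have := dvd_of_intCast_dvd_quintic hθ hK (n := 3) (c := ![1, 1, 0, 0, 0])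
      (by simpa [quintic] using h3) 0
    norm_num at this
  · by_contra! hn
    have hd := absNorm_dvd_of_mem hθ hK (Ideal.mem_span_singleton_self
      (θ ^ 4 - θ ^ 3 + θ ^ 2 - θ + 1))
    have hxy' := congrArg (fun z => Ideal.absNorm (Ideal.span {z})) hxy
    simp only [← Ideal.span_singleton_mul_span_singleton, map_mul] at hxy'
    have := (mul_dvd_mul (key hn.1 ⟨y, hxy⟩) (key hn.2 ⟨x, by rw [hxy, mul_comm]⟩)).trans
      (hxy' ▸ hd)
    norm_num at this

end UnitsAndPrimes

theorem exists_eq_squarefree_mul_sq {R : Type*} [CommRing R] [IsDomain R]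
    [UniqueFactorizationMonoid R] {x : R} (hx : x ≠ 0) : ∃ d m, Squarefree d ∧ x = d * m ^ 2 := by
  induction x using WfDvdMonoid.induction_on_irreducible with
  | zero => contradiction
  | unit u hu => exact ⟨u, 1, hu.squarefree, by ring⟩
  | mul z p hz hp ih =>
    obtain ⟨d, m, hd, rfl⟩ := ih hz
    obtain ⟨e, rfl⟩ | h := hp.dvd_or_isRelPrime (n := d)
    · exact ⟨e, p * m, hd.squarefree_of_dvd (Dvd.intro_left p rfl), by ring⟩
    · exact ⟨p * d, m, squarefree_mul_iff.2 ⟨h, hp.squarefree, hd⟩, by ring⟩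

theorem dvd_of_squarefree_of_eq_sq {R : Type*} [CommRing R] [IsDomain R] {p d m n A D Z : R}
    (hp : Prime p) (hd : Squarefree d) (hmn : IsRelPrime m n)
    (h : d * (d ^ 2 * m ^ 4 + A * d * n ^ 2 * m ^ 2 + D * n ^ 4) = Z ^ 2) (hpd : p ∣ d) :
    p ∣ D := by
  by_contra hD
  obtain ⟨d, rfl⟩ := hpd
  have hpd : ¬ p ∣ d := fun h => hp.not_isUnit (hd p (mul_dvd_mul_left p h))
  obtain ⟨Z, rfl⟩ := hp.dvd_of_dvd_pow ⟨_, by rw [← h, mul_assoc]⟩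
  have h₁ : d * ((p * d) ^ 2 * m ^ 4 + A * (p * d) * n ^ 2 * m ^ 2 + D * n ^ 4) = p * Z ^ 2 :=
    mul_left_cancel₀ hp.ne_zero (by linear_combination h)
  have h₂ : p ∣ d * (D * n ^ 4) :=
    ⟨Z ^ 2 - d * (p * d ^ 2 * m ^ 4 + A * d * n ^ 2 * m ^ 2), by linear_combination h₁⟩
  have hn := hp.dvd_of_dvd_pow ((hp.dvd_or_dvd ((hp.dvd_or_dvd h₂).resolve_left hpd)).resolve_left hD)
  obtain ⟨n, rfl⟩ := hn
  have h₃ : p * (d * (d ^ 2 * m ^ 4 + p * (A * d * n ^ 2 * m ^ 2 + D * p * n ^ 4))) = Z ^ 2 :=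
    mul_left_cancel₀ hp.ne_zero (by linear_combination h₁)
  obtain ⟨Z, rfl⟩ := hp.dvd_of_dvd_pow ⟨_, h₃.symm⟩
  have h₄ : d * (d ^ 2 * m ^ 4 + p * (A * d * n ^ 2 * m ^ 2 + D * p * n ^ 4)) = p * Z ^ 2 :=
    mul_left_cancel₀ hp.ne_zero (by linear_combination h₃)
  have h₅ : p ∣ d ^ 3 * m ^ 4 :=
    ⟨Z ^ 2 - d * (A * d * n ^ 2 * m ^ 2 + D * p * n ^ 4), by linear_combination h₄⟩
  have hm := hp.dvd_of_dvd_pow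
    ((hp.dvd_or_dvd h₅).resolve_left fun h => hpd (hp.dvd_of_dvd_pow h))
  exact hp.not_isUnit (hmn hm (Dvd.intro _ rfl))

theorem exists_eq_isUnit_mul_pow_mul_pow {R : Type*} [CommRing R] [IsDomain R]
    [UniqueFactorizationMonoid R] {d p q : R} (hd : d ≠ 0) (hp : Prime p) (hq : Prime q)
    (h : ∀ r, Prime r → r ∣ d → r ∣ p ∨ r ∣ q) : ∃ u a b, IsUnit u ∧ d = u * p ^ a * q ^ b := by
  obtain ⟨a, d₁, hpd₁, rfl⟩ := WfDvdMonoid.max_power_factor hd hp.irreducible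
  obtain ⟨b, u, hqu, rfl⟩ := WfDvdMonoid.max_power_factor (right_ne_zero_of_mul hd) hq.irreducible
  refine ⟨u, a, b, ?_, by ring⟩
  by_contra hu
  obtain ⟨r, hr, hru⟩ := WfDvdMonoid.exists_irreducible_factor hu
    (right_ne_zero_of_mul (right_ne_zero_of_mul hd))
  obtain h' | h' := h r hr.prime ((hru.mul_left _).mul_left _)
  · exact hpd₁ ((hr.associated_of_dvd hp.irreducible h').symm.dvd.trans (hru.mul_left _))
  · exact hqu ((hr.associated_of_dvd hq.irreducible h').symm.dvd.trans hru)

section SquareClasses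

variable {K : Type*} [Field K] [NumberField K] {θ : 𝓞 K}

theorem exists_eq_classRep_mul_sq (hθ : θ ^ 5 = 2) (hK : Module.finrank ℚ K = 5) {A : 𝓞 K}
    {b c z δ : K} (hδ : δ = (θ : K) ^ 4 - θ ^ 3 + θ ^ 2 - θ + 1) (hb : b ≠ 0)
    (h : b ^ 2 + A * b * c ^ 2 + 5 * δ ^ 2 * c ^ 4 = b * z ^ 2) :
    ∃ s t, b = classRep (θ : K) s * t ^ 2 := by
  have := isPrincipalIdealRing_of_fifth_root hθ hK
  obtain ⟨p, q, hq, rfl⟩ := IsFractionRing.div_surjective (A := 𝓞 K) b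
  have hq0 : (q : K) ≠ 0 := RingOfIntegers.coe_ne_zero_iff.2 (nonZeroDivisors.ne_zero hq)
  have hp0 : p ≠ 0 := by
    rintro rfl
    simp at hb
  obtain ⟨d, m, hd, hdm⟩ :=
      exists_eq_squarefree_mul_sq (mul_ne_zero hp0 (nonZeroDivisors.ne_zero hq))
  have hdm' : (p : K) * q = d * m ^ 2 := by exact_mod_cast congrArg (algebraMap (𝓞 K) K) hdm
  have hd0 : d ≠ 0 := hd.ne_zero
  have hm0 : (m : K) ≠ 0 := by
    intro hm0
    rw [hm0] at hdm'
    exact hq0 ((mul_eq_zero.1 (hdm'.trans (by ring))).resolve_left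
      (RingOfIntegers.coe_ne_zero_iff.2 hp0))
  obtain ⟨t, ht⟩ : ∃ t : K, t = m / q := ⟨_, rfl⟩
  have ht0 : t ≠ 0 := by rw [ht]; positivity
  have hb' : (p : K) / q = d * t ^ 2 := by
    rw [ht]
    field_simp
    exact hdm'
  change ((p : K) / q) ^ 2 + A * ((p : K) / q) * c ^ 2 + _ = (p : K) / q * _ at h
  change ∃ s t, (p : K) / q = _
  rw [hb'] at h ⊢
  obtain ⟨n, ⟨k, hk⟩, hnk, hc⟩ := IsFractionRing.exists_reduced_fraction (A := 𝓞 K) (c / t)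
  have hk0 : (k : K) ≠ 0 := RingOfIntegers.coe_ne_zero_iff.2 (nonZeroDivisors.ne_zero hk)
  have hc' : c * k = n * t := by
    rw [IsFractionRing.mk'_eq_div, div_eq_div_iff hk0 ht0] at hc
    exact hc.symm
  set D : 𝓞 K := θ ^ 4 - θ ^ 3 + θ ^ 2 - θ + 1 with hD
  have hDδ : (D : K) = δ := by
    rw [hδ, hD]
    simp
  set y : 𝓞 K := d * (d ^ 2 * k ^ 4 + A * d * n ^ 2 * k ^ 2 + 5 * D ^ 2 * n ^ 4) with hy
  have hyK : (y : K) = (d * z * k ^ 2 / t) ^ 2 := by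
    rw [← hDδ] at h
    simp only [hy, map_mul, map_add, map_pow, map_ofNat]
    have hc2 : (n : K) ^ 2 * t ^ 2 = c ^ 2 * k ^ 2 := by linear_combination -(n * t + c * k) * hc'
    have hc4 : (n : K) ^ 4 * t ^ 4 = c ^ 4 * k ^ 4 := by
      linear_combination (n ^ 2 * t ^ 2 + c ^ 2 * k ^ 2) * hc2
    rw [div_pow, eq_div_iff (pow_ne_zero 2 ht0)]
    refine mul_left_cancel₀ (pow_ne_zero 2 ht0) ?_
    linear_combination d * (k ^ 4 * h + A * d * t ^ 2 * k ^ 2 * hc2 + 5 * (D : K) ^ 2 * hc4)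
  have hint : IsIntegral ℤ (d * z * k ^ 2 / t : K) :=
    IsIntegral.of_pow two_pos (hyK ▸ y.isIntegral_coe)
  obtain ⟨Z, hZ⟩ : ∃ Z : 𝓞 K, (Z : K) = d * z * k ^ 2 / t := ⟨⟨_, hint⟩, rfl⟩
  have hyZ : y = Z ^ 2 := RingOfIntegers.coe_injective (by
    rw [map_pow]
    exact hyK.trans (by rw [← hZ]))
  have h5 : (5 : 𝓞 K) ∣ (1 + θ ^ 2) ^ 5 :=
    ⟨1 + 4 * θ + θ ^ 2 + 2 * θ ^ 3 + 2 * θ ^ 4, by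
      linear_combination (10 * θ + 5 * θ ^ 3 + θ ^ 5 + 2) * hθ⟩
  obtain ⟨u, i, j, hu, hd'⟩ := exists_eq_isUnit_mul_pow_mul_pow hd0 (prime_one_add_sq hθ hK)
    (prime_alternating_sum hθ hK) fun r hr hrd => by
      have := dvd_of_squarefree_of_eq_sq hr hd hnk.symm hyZ hrd
      exact (hr.dvd_or_dvd this).imp (fun h => hr.dvd_of_dvd_pow (h.trans h5))
        fun h => hr.dvd_of_dvd_pow h
  obtain ⟨s, w, hsw⟩ := exists_eq_classRep_mul_sq_of_isUnit hθ hK hu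
  refine ⟨s + ![0, 0, 0, j, i], w * t, ?_⟩
  have hdw : d = classRep θ (s + ![0, 0, 0, j, i]) * w ^ 2 := by
    rw [hd', hsw, classRep_add]
    simp [classRep]
    ring
  have hdK := congrArg (algebraMap (𝓞 K) K) hdw
  rw [map_mul, map_pow, map_classRep] at hdK
  linear_combination t ^ 2 * hdK

theorem exists_eq_toLocal_classRep_mul_sq (hθ : θ ^ 5 = 2) (hK : Module.finrank ℚ K = 5) {A : 𝓞 K}
    {b : localSubring θ} {c z δ : K} (hδ : δ = (θ : K) ^ 4 - θ ^ 3 + θ ^ 2 - θ + 1)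
    (hb : IsUnit b)
    (h : (b : K) ^ 2 + A * b * c ^ 2 + 5 * δ ^ 2 * c ^ 4 = b * z ^ 2) :
    ∃ (r : Fin 5 → ℕ) (t : localSubring θ), IsUnit t ∧ b = toLocal θ (classRep θ r) * t ^ 2 := by
  have hb0 : (b : K) ≠ 0 := fun h => hb.ne_zero (Subtype.ext h)
  obtain ⟨r, t, ht⟩ := exists_eq_classRep_mul_sq hθ hK hδ hb0 h
  have hcr : ((toLocal θ (classRep θ r) : localSubring θ) : K) = classRep (θ : K) r :=
    map_classRep (algebraMap (𝓞 K) K) θ r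
  obtain ⟨c, hc⟩ := isUnit_toLocal_classRep hθ hK r
  have hcK : ((c⁻¹ : (localSubring θ)ˣ) : localSubring θ) * classRep (θ : K) r = 1 := by
    rw [← hcr, ← hc]
    exact_mod_cast congrArg Subtype.val c.inv_mul
  have htO : t ∈ localSubring θ := mem_localSubring_of_sq_add hθ hK 0 (-(↑c⁻¹ * b)) (by
    push_cast
    linear_combination -t ^ 2 * hcK - ((c⁻¹ : (localSubring θ)ˣ) : localSubring θ) * ht)
  lift t to localSubring θ using htO
  have hbt : b = toLocal θ (classRep θ r) * t ^ 2 := Subtype.ext (by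
    push_cast
    rw [hcr, ht])
  refine ⟨r, t, ?_, hbt⟩
  rw [hbt] at hb
  exact (isUnit_pow_iff two_ne_zero).1 (isUnit_of_mul_isUnit_right hb)

theorem exists_eq_sq_of_dvd_sub_sq (hθ : θ ^ 5 = 2) (hK : Module.finrank ℚ K = 5) {A : 𝓞 K}
    {b s : localSubring θ} {c z δ : K} (hδ : δ = (θ : K) ^ 4 - θ ^ 3 + θ ^ 2 - θ + 1)
    (hb : IsUnit b) (hbs : toLocal θ θ ^ 11 ∣ b - s ^ 2)
    (h : (b : K) ^ 2 + A * b * c ^ 2 + 5 * δ ^ 2 * c ^ 4 = b * z ^ 2) :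
    ∃ t, b = t ^ 2 := by
  obtain ⟨r, t, ⟨t, rfl⟩, hbt⟩ := exists_eq_toLocal_classRep_mul_sq hθ hK hδ hb h
  have hs : IsUnit s := by
    by_contra hs
    rw [not_isUnit_iff_dvd hθ hK] at hs
    refine (not_isUnit_iff_dvd hθ hK).2 ?_ hb
    have := dvd_add ((dvd_pow_self _ (by norm_num)).trans hbs) (dvd_pow hs two_ne_zero)
    rwa [sub_add_cancel] at this
  have hev := even_of_dvd_classRep_sub_sq hθ hK (s := r) (hs.mul (t⁻¹).isUnit) (by
    have := hbs.mul_right (↑t⁻¹ ^ 2)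
    rw [hbt] at this
    convert this using 1
    have ht1 : (t : localSubring θ) * ↑t⁻¹ = 1 := t.mul_inv
    linear_combination -toLocal θ (classRep θ r) * (t * ↑t⁻¹ + 1) * ht1)
  refine ⟨toLocal θ (classRep θ fun i => (r i).div2) * t, ?_⟩
  have h1 : (fun i => (r i).bodd.toNat) = fun _ => 0 := by
    funext i
    have := Nat.even_iff.1 (hev i)
    rw [Nat.mod_two_of_bodd] at this
    exact this
  rw [hbt, classRep_eq_mul_sq θ r, h1]
  simp [classRep]
  ring

end SquareClasses

section Descent

variable {K : Type*} [Field K] [NumberField K] {θ : 𝓞 K}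

@[simp, norm_cast] theorem coe_ofNat_localSubring {K : Type*} [Field K] {θ : 𝓞 K} (n : ℕ)
    [n.AtLeastTwo] : ((ofNat(n) : localSubring θ) : K) = ofNat(n) := rfl

theorem isUnit_or_isUnit_of_add_eq (hθ : θ ^ 5 = 2) (hK : Module.finrank ℚ K = 5)
    {x y z : localSubring θ} (h : x + y = 1 + toLocal θ θ * z) : IsUnit x ∨ IsUnit y := by
  obtain hx | hx := dvd_or_dvd_sub_one_local hθ hK x
  · refine .inr ((isUnit_iff_dvd_sub_one hθ hK).2 ?_)
    have := dvd_sub (Dvd.intro z rfl) hx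
    rwa [show toLocal θ θ * z - x = y - 1 by linear_combination -h] at this
  · exact .inl ((isUnit_iff_dvd_sub_one hθ hK).2 hx)

theorem isUnit_of_isUnit_add_mul (hθ : θ ^ 5 = 2) (hK : Module.finrank ℚ K = 5)
    {x y z : localSubring θ} (hx : IsUnit x) (h : y = x + toLocal θ θ * z) : IsUnit y := by
  rw [isUnit_iff_dvd_sub_one hθ hK] at hx ⊢
  have := dvd_add hx (Dvd.intro z rfl)
  rwa [h, add_sub_right_comm]

theorem exists_eq_sq_of_quadratic (hθ : θ ^ 5 = 2) (hK : Module.finrank ℚ K = 5) {A : 𝓞 K}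
    {b c d s z : localSubring θ} (hd : d = toLocal θ (θ ^ 4 - θ ^ 3 + θ ^ 2 - θ + 1))
    (hb : IsUnit b) (hbs : toLocal θ θ ^ 11 ∣ b - s ^ 2)
    (h : b ^ 2 + toLocal θ A * b * c ^ 2 + 5 * d ^ 2 * c ^ 4 = b * z ^ 2) :
    ∃ t : (localSubring θ)ˣ, b = t ^ 2 := by
  obtain ⟨t, rfl⟩ := exists_eq_sq_of_dvd_sub_sq hθ hK (A := A) (c := c) (z := z) (δ := d)
    (by simp [hd]) hb hbs (by
      have := congrArg Subtype.val h
      push_cast at this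
      exact this)
  obtain ⟨t, rfl⟩ := (isUnit_pow_iff two_ne_zero).1 hb
  exact ⟨t, rfl⟩

theorem exists_isUnit_root (hθ : θ ^ 5 = 2) (hK : Module.finrank ℚ K = 5)
    {d e z : localSubring θ} (he : e = toLocal θ θ * z) {f : K}
    (h : f ^ 2 = 1 + 10 * d * e ^ 2 + 5 * d ^ 2 * e ^ 4) :
    ∃ b : localSubring θ, IsUnit b ∧ b ^ 2 - 5 * d * b * e ^ 2 + 5 * d ^ 2 * e ^ 4 = b := by
  have hb := mem_localSubring_of_sq_add hθ hK (x := (1 + f + 5 * d * e ^ 2) / 2)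
    (-(1 + 5 * d * e ^ 2)) (5 * d ^ 2 * e ^ 4) (by
      push_cast
      linear_combination h / 4)
  obtain ⟨b, hbf⟩ : ∃ b : localSubring θ, (b : K) = (1 + f + 5 * d * e ^ 2) / 2 := ⟨⟨_, hb⟩, rfl⟩
  have hbb : b ^ 2 - 5 * d * b * e ^ 2 + 5 * d ^ 2 * e ^ 4 = b := Subtype.ext (by
    push_cast
    rw [hbf]
    linear_combination h / 4)
  obtain hu | hu := isUnit_or_isUnit_of_add_eq hθ hK (x := b) (y := 1 + 5 * d * e ^ 2 - b)
    (z := 5 * d * z * e) (by rw [he]; ring)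
  · exact ⟨b, hu, hbb⟩
  · exact ⟨_, hu, by linear_combination hbb⟩

theorem sq_ne_of_eq_uniformizer_mul (hθ : θ ^ 5 = 2) (hK : Module.finrank ℚ K = 5)
    {d e v : localSubring θ} (hd : d = toLocal θ (θ ^ 4 - θ ^ 3 + θ ^ 2 - θ + 1))
    (hv : IsUnit v) (he : e = toLocal θ θ * v) (f : K) :
    f ^ 2 ≠ 1 + 10 * d * e ^ 2 + 5 * d ^ 2 * e ^ 4 := by
  intro h
  obtain ⟨b, hb, hbb⟩ := exists_isUnit_root hθ hK he h
  obtain ⟨r, t, ht, hbt⟩ := exists_eq_toLocal_classRep_mul_sq hθ hK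
    (A := -5 * (θ ^ 4 - θ ^ 3 + θ ^ 2 - θ + 1)) (c := e) (z := 1) (δ := d) (by simp [hd]) hb (by
      have := congrArg Subtype.val hbb
      push_cast at this
      have hdK : (d : K) = θ ^ 4 - θ ^ 3 + θ ^ 2 - θ + 1 := by simp [hd]
      simp only [map_mul, map_neg, map_add, map_sub, map_pow, map_one, map_ofNat, ← hdK]
      linear_combination this)
  refine not_dvd_classRep_quadratic hθ hK ht hv (he ▸ hd ▸ rfl : d * e ^ 2 = _) hbt
    ⟨(d * e ^ 2) * (b - d * e ^ 2), ?_⟩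
  rw [show toLocal θ θ ^ 10 = (toLocal θ θ ^ 5) ^ 2 by ring, toLocal_fifth_root hθ]
  linear_combination hbb

theorem Units.sq_inv_eq_of_quadratic {R : Type*} [CommRing R] (g : Rˣ) {c k e z : R}
    (h : (g : R) ^ 4 + c * e ^ 2 * g ^ 2 + k * e ^ 4 = g ^ 2 * z ^ 2) :
    (z * ↑g⁻¹) ^ 2 = 1 + c * (e * ↑g⁻¹) ^ 2 + k * (e * ↑g⁻¹) ^ 4 := by
  have hg : (g : R) * ↑g⁻¹ = 1 := g.mul_inv
  linear_combination -(↑g⁻¹ : R) ^ 4 * h + (g * ↑g⁻¹ + 1) *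
    ((g : R) ^ 2 * ↑g⁻¹ ^ 2 + 1 + c * e ^ 2 * ↑g⁻¹ ^ 2 - z ^ 2 * ↑g⁻¹ ^ 2) * hg

theorem exists_sq_eq_of_quadratic (hθ : θ ^ 5 = 2) (hK : Module.finrank ℚ K = 5)
    {d e z : localSubring θ} (hd : d = toLocal θ (θ ^ 4 - θ ^ 3 + θ ^ 2 - θ + 1))
    (he : e = toLocal θ θ * z) {f : K} (h : f ^ 2 - f = -5 * d * e ^ 2 + 20 * d ^ 2 * e ^ 4) :
    ∃ (g : (localSubring θ)ˣ) (f' : K),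
      f' ^ 2 = 1 + 10 * d * (e * g : localSubring θ) ^ 2 + 5 * d ^ 2 * (e * g :
          localSubring θ) ^ 4 := by
  lift f to localSubring θ using mem_localSubring_of_sq_add hθ hK (x := f) (-1)
    (5 * d * e ^ 2 - 20 * d ^ 2 * e ^ 4) (by push_cast; linear_combination h)
  replace h : f ^ 2 - f = -5 * d * e ^ 2 + 20 * d ^ 2 * e ^ 4 :=
    Subtype.ext (by push_cast; exact h)
  wlog hf : IsUnit f generalizing f
  · refine this (f := 1 - f) (by linear_combination h)
      ((isUnit_or_isUnit_of_add_eq hθ hK (z := 0) (by ring)).resolve_left hf)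
  obtain ⟨b, hb⟩ : ∃ b, b = f - 5 * d * e ^ 2 := ⟨_, rfl⟩
  have hbu : IsUnit b := isUnit_of_isUnit_add_mul hθ hK hf
    (z := -5 * d * z * e) (by rw [hb, he]; ring)
  obtain ⟨g, hg⟩ := exists_eq_sq_of_quadratic hθ hK (c := e) (s := f) (z := 1)
    (A := 10 * (θ ^ 4 - θ ^ 3 + θ ^ 2 - θ + 1)) hd hbu
    ⟨-5 * d ^ 2 * toLocal θ θ ^ 3 * z ^ 4, by
      have h5 := toLocal_fifth_root hθ
      rw [hb, he]
      rw [he] at h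
      linear_combination -h + 5 * d ^ 2 * toLocal θ θ ^ 4 * z ^ 4 * (toLocal θ θ ^ 5 + 2) * h5⟩
    (by
      rw [map_mul, map_ofNat, ← hd, hb]
      linear_combination h)
  refine ⟨g⁻¹, ((1 * ↑g⁻¹ : localSubring θ) : K), ?_⟩
  exact congrArg Subtype.val (g.sq_inv_eq_of_quadratic (c := 10 * d) (k := 5 * d ^ 2) (e :=
      e) (z := 1) (by
    linear_combination h + (g ^ 2 + f + 5 * d * e ^ 2 - 1) * (hb - hg)))

theorem exists_quadratic_of_quartic (hθ : θ ^ 5 = 2) (hK : Module.finrank ℚ K = 5)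
    {d : localSubring θ} (hd : d = toLocal θ (θ ^ 4 - θ ^ 3 + θ ^ 2 - θ + 1)) (j : ℕ)
    {b c v : localSubring θ} {z : K} (hb : IsUnit b) (hv : IsUnit v)
    (hc : c = toLocal θ θ ^ (5 * (j + 1) + 1) * v)
    (h : (b : K) ^ 2 - 5 * d * b * c ^ 2 + 5 * d ^ 2 * c ^ 4 = b * z ^ 2) :
    ∃ v' : localSubring θ, IsUnit v' ∧ ∃ f : K, f ^ 2 - f =
      -5 * d * (toLocal θ θ ^ (5 * j + 1) * v' : localSubring θ) ^ 2 +
        20 * d ^ 2 * (toLocal θ θ ^ (5 * j + 1) * v' : localSubring θ) ^ 4 := by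
  obtain ⟨b, rfl⟩ := hb
  have hbb : (b : localSubring θ) * ↑b⁻¹ = 1 := b.mul_inv
  have hbK : (b : localSubring θ) * ((b⁻¹ : (localSubring θ)ˣ) : localSubring θ) = (1 : K) :=
    congrArg Subtype.val hbb
  lift z to localSubring θ using mem_localSubring_of_sq_add hθ hK (x := z) 0
    (-(b - 5 * d * c ^ 2 + 5 * d ^ 2 * c ^ 4 * ↑b⁻¹)) (by
      push_cast
      linear_combination -((b⁻¹ : (localSubring θ)ˣ) : localSubring θ) * h +
        (b - 5 * d * c ^ 2 - z ^ 2 : K) * hbK)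
  have h' : (b : localSubring θ) ^ 2 - 5 * d * b * c ^ 2 + 5 * d ^ 2 * c ^ 4 = b * z ^ 2 :=
    Subtype.ext (by push_cast; exact h)
  obtain ⟨t, ht⟩ := exists_eq_sq_of_quadratic hθ hK (A := -5 * (θ ^ 4 - θ ^ 3 + θ ^ 2 - θ + 1))
    (c := c) (s := z) (z := z) hd b.isUnit ⟨↑b⁻¹ * toLocal θ θ *
      (5 * d * b * (toLocal θ θ ^ (5 * j) * v) ^ 2 -
        5 * d ^ 2 * (toLocal θ θ ^ (5 * j) * v) ^ 4 * toLocal θ θ ^ 12), by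
        rw [hc] at h'
        linear_combination ↑b⁻¹ * h' - (b - z ^ 2) * hbb⟩
    (by
      rw [map_mul, map_neg, map_ofNat, ← hd]
      linear_combination h')
  rw [ht] at h'
  have h₁ := congrArg Subtype.val (t.sq_inv_eq_of_quadratic (c := -5 * d) (k := 5 * d ^ 2)
    (e := c) (z := z) (by linear_combination h'))
  have h₂ : c * ↑t⁻¹ = 2 * (toLocal θ θ ^ (5 * j + 1) * (v * ↑t⁻¹)) := by
    rw [← toLocal_fifth_root hθ, hc]
    ring
  rw [h₂] at h₁
  push_cast at h₁
  refine ⟨_, hv.mul (t⁻¹).isUnit, (((z * ↑t⁻¹ : localSubring θ) : K) + 1) / 2, ?_⟩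
  push_cast
  linear_combination h₁ / 4

theorem quadratic_ne_of_eq_uniformizer_pow_mul (hθ : θ ^ 5 = 2) (hK : Module.finrank ℚ K = 5)
    {d : localSubring θ} (hd : d = toLocal θ (θ ^ 4 - θ ^ 3 + θ ^ 2 - θ + 1)) (j : ℕ)
    {e v : localSubring θ} (hv : IsUnit v) (he : e = toLocal θ θ ^ (5 * j + 1) * v) (f : K) :
    f ^ 2 - f ≠ -5 * d * e ^ 2 + 20 * d ^ 2 * e ^ 4 := by
  induction j generalizing e v f with
  | zero =>
    intro h
    obtain ⟨g, f', h'⟩ := exists_sq_eq_of_quadratic hθ hK hd (by rw [he, pow_succ', mul_assoc]) h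
    exact sq_ne_of_eq_uniformizer_mul hθ hK hd (hv.mul g.isUnit) (by rw [he]; ring) _ h'
  | succ j ih =>
    intro h
    obtain ⟨g, f', h'⟩ := exists_sq_eq_of_quadratic hθ hK hd (by rw [he, pow_succ', mul_assoc]) h
    obtain ⟨b, hb, hbb⟩ := exists_isUnit_root hθ hK (e := e * g)
      (by rw [he, pow_succ', mul_assoc, mul_assoc]) h'
    obtain ⟨v', hv', f₁, h₁⟩ := exists_quadratic_of_quartic hθ hK hd j (c := e * g) (z := 1) hb
      (hv.mul g.isUnit) (by rw [he, mul_assoc]) (by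
        rw [one_pow, mul_one]
        exact congrArg Subtype.val hbb)
    exact ih hv' rfl f₁ h₁

theorem quartic_identity {R : Type*} [CommRing R] {t u w d N : R}
    (hd : d = t ^ 4 - t ^ 3 + t ^ 2 - t + 1)
    (h : d * w ^ 2 = u ^ 4 - u ^ 3 + u ^ 2 - u + 1)
    (hN : N = (2 * t ^ 2 + 2 - t) * (u ^ 2 + 1) - (t ^ 2 + 1 + 2 * t) * u + 2 * d * w) :
    (t * u - 1) ^ 2 * (N ^ 2 - 5 * (u - t) ^ 2 * N + 5 * (u - t) ^ 4) =
      ((t ^ 2 - 1) * w + u ^ 2 - 1) ^ 2 * N * d := by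
  subst hN hd
  linear_combination (-2 * t ^ 8 * w + 2 * t ^ 7 * w + 2 * t ^ 6 * w - 2 * t ^ 5 * w - 2 * t ^ 3 *
      w + 2 * t ^ 2 * w + 2 * t * w - 2 * w - 2 * t ^ 6 * u ^ 2 + t ^ 5 * u ^ 2 + 6 * t ^ 4 *
          u ^ 2 - 6 * t ^ 3 * u ^ 2 + 6 * t ^ 2 * u ^ 2 - 3 * t * u ^ 2 + 2 * u ^ 2 + t ^ 6 * u -
              6 * t ^ 5 * u + 7 * t ^ 4 * u - 12 * t ^ 3 * u + 7 * t ^ 2 * u - 6 * t * u + u + 2 *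
                  t ^ 6 - 3 * t ^ 5 + 6 * t ^ 4 - 6 * t ^ 3 + 6 * t ^ 2 + t - 2) * h

end Descent

section Curve

variable {K : Type*} [Field K] [NumberField K] {θ : 𝓞 K}

theorem exists_eq_or_neg_eq_one_add (hθ : θ ^ 5 = 2) (hK : Module.finrank ℚ K = 5)
    {w z : localSubring θ} (h : w ^ 2 = 1 + 4 * toLocal θ θ * z) :
    ∃ y, w = 1 + 2 * toLocal θ θ * y ∨ -w = 1 + 2 * toLocal θ θ * y := by
  obtain ⟨t, ht⟩ : ∃ t : localSubring θ, (t : K) = (w - 1) / 2 :=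
    ⟨⟨_, mem_localSubring_of_sq_add hθ hK 1 (-toLocal θ θ * z) (by
      have := congrArg Subtype.val h
      push_cast at this ⊢
      linear_combination this / 4)⟩, rfl⟩
  have hw : w = 1 + 2 * t := Subtype.ext (by
    push_cast
    rw [ht]
    ring)
  have h2 : (2 : localSubring θ) ≠ 0 := two_ne_zero
  have htz : t * (t + 1) = toLocal θ θ * z :=
    mul_left_cancel₀ (pow_ne_zero 2 h2) (by rw [hw] at h; linear_combination h)
  obtain ⟨y, hy⟩ | ⟨y, hy⟩ := (prime_toLocal_fifth_root hθ hK).dvd_or_dvd (Dvd.intro _ htz.symm)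
  · exact ⟨y, .inl (by rw [hw, hy]; ring)⟩
  · exact ⟨-y, .inr (by rw [hw]; linear_combination -2 * hy)⟩

theorem mul_sq_ne_of_eq_one_add (hθ : θ ^ 5 = 2) (hK : Module.finrank ℚ K = 5)
    {d x v w : localSubring θ} (hd : d = toLocal θ (θ ^ 4 - θ ^ 3 + θ ^ 2 - θ + 1)) (j : ℕ)
    (hv : IsUnit v) (hx : x = 1 + 2 ^ (j + 2) * v) :
    d * w ^ 2 ≠ (toLocal θ θ * x) ^ 4 - (toLocal θ θ * x) ^ 3 + (toLocal θ θ * x) ^ 2 -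
      toLocal θ θ * x + 1 := by
  intro h
  obtain ⟨p, hp⟩ : ∃ p, p = toLocal θ θ := ⟨_, rfl⟩
  have hp5 : p ^ 5 = 2 := hp ▸ toLocal_fifth_root hθ
  have hdp : d = p ^ 4 - p ^ 3 + p ^ 2 - p + 1 := by simp [hd, hp]
  obtain ⟨u, hu⟩ : ∃ u, u = p * x := ⟨_, rfl⟩
  obtain ⟨s, hs⟩ : ∃ s, s = p * (2 ^ j * v) := ⟨_, rfl⟩
  have hus : u = p + 4 * s := by rw [hu, hx, hs]; ring
  rw [← hp, ← hu] at h
  have hdu : IsUnit d := isUnit_of_isUnit_add_mul hθ hK isUnit_one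
    (z := p ^ 3 - p ^ 2 + p - 1) (by rw [hdp, ← hp]; ring)
  obtain ⟨i, hi⟩ := hdu.exists_right_inv
  obtain ⟨y, hy⟩ : ∃ y, w = 1 + 2 * p * y ∨ -w = 1 + 2 * p * y := by
    rw [hp]
    refine exists_eq_or_neg_eq_one_add hθ hK
      (z := i * (2 ^ j * v) * (u ^ 3 + u ^ 2 * p + u * p ^ 2 + p ^ 3 - (u ^ 2 + u * p + p ^ 2) +
          (u + p) - 1)) ?_
    rw [← hp]
    linear_combination i * h - (w ^ 2 - 1) * hi - i * hdp +
      i * (u ^ 3 + u ^ 2 * p + u * p ^ 2 + p ^ 3 - (u ^ 2 + u * p + p ^ 2) + (u + p) - 1) *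
        (hus + 4 * hs)
  wlog hw : w = 1 + 2 * p * y generalizing w
  · exact this (w := -w) (by rw [neg_sq]; exact h) (.inl (hy.resolve_left hw)) (hy.resolve_left hw)
  obtain ⟨b, hb⟩ : ∃ b, b = d * (d + (2 * p ^ 2 + 2 - p) * (2 * s * p + 4 * s ^ 2) -
    (p ^ 2 + 1 + 2 * p) * s + d * p * y) := ⟨_, rfl⟩
  have hbu : IsUnit b := isUnit_of_isUnit_add_mul hθ hK (hdu.mul hdu)
    (z := d * ((2 * p ^ 2 + 2 - p) * (2 * s + 4 * s * (2 ^ j * v)) -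
      (p ^ 2 + 1 + 2 * p) * (2 ^ j * v) + d * y)) (by rw [hb, ← hp, hs]; ring)
  have hpu : IsUnit (p * u - 1) := isUnit_of_isUnit_add_mul hθ hK isUnit_one.neg (z := u)
    (by rw [← hp]; ring)
  have hpuK : ((p : K) * u - 1) ≠ 0 := fun h0 => hpu.ne_zero (Subtype.ext (by push_cast; exact h0))
  have hsK : (s : K) = (u - p) / 4 := by
    have := congrArg Subtype.val hus
    push_cast at this
    linear_combination -this / 4
  have hbK : (b : K) = d * ((2 * p ^ 2 + 2 - p) * (u ^ 2 + 1) - (p ^ 2 + 1 + 2 * p) * u +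
      2 * d * w) / 4 := by
    have h₁ := congrArg Subtype.val hb
    have h₂ := congrArg Subtype.val hdp
    have h₃ := congrArg Subtype.val hw
    push_cast at h₁ h₂ h₃
    rw [h₁, h₃, hsK]
    linear_combination (d / 2 : K) * h₂
  have hid := congrArg Subtype.val (quartic_identity hdp h rfl)
  obtain ⟨v', hv', f, hf⟩ := exists_quadratic_of_quartic hθ hK hd j (c := 2 * s)
    (z := d * ((p ^ 2 - 1) * w + u ^ 2 - 1) / (2 * (p * u - 1))) hbu hv
    (by rw [hs, ← hp, ← hp5]; ring) (by
      push_cast at hid ⊢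
      rw [div_pow, mul_div_assoc', eq_div_iff (pow_ne_zero 2 (mul_ne_zero two_ne_zero hpuK)),
        hsK, hbK]
      linear_combination (d ^ 2 / 4 : K) * hid)
  exact quadratic_ne_of_eq_uniformizer_pow_mul hθ hK hd j hv' rfl f hf

end Curve

theorem eq_or_two_mul_eq_zero_of_quintic_eq : ∀ (b₀ b₁ b₂ b₃ b₄ : Bool) (p r : ZMod 4),
    let c₀ : ZMod 4 := b₀.toNat ^ 2 + 4 * (b₁.toNat * b₄.toNat + b₂.toNat * b₃.toNat)
    let c₁ : ZMod 4 := 2 * (b₀.toNat * b₁.toNat) + 2 * (b₃.toNat ^ 2 + 2 * (b₂.toNat * b₄.toNat))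
    let c₂ : ZMod 4 := b₁.toNat ^ 2 + 2 * (b₀.toNat * b₂.toNat) + 4 * (b₃.toNat * b₄.toNat)
    let c₃ : ZMod 4 := 2 * (b₀.toNat * b₃.toNat + b₁.toNat * b₂.toNat) + 2 * b₄.toNat ^ 2
    let c₄ : ZMod 4 := b₂.toNat ^ 2 + 2 * (b₀.toNat * b₄.toNat + b₁.toNat * b₃.toNat)
    2 * c₁ - 2 * c₂ + 2 * c₃ - 2 * c₄ + c₀ - r ^ 4 = 0 →
    2 * c₂ - 2 * c₃ + 2 * c₄ - c₀ + c₁ + p * r ^ 3 = 0 →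
    2 * c₃ - 2 * c₄ + c₀ - c₁ + c₂ - p ^ 2 * r ^ 2 = 0 →
    2 * c₄ - c₀ + c₁ - c₂ + c₃ + p ^ 3 * r = 0 →
    c₀ - c₁ + c₂ - c₃ + c₄ - p ^ 4 = 0 → p - r = 0 ∨ 2 * p = 0 ∧ 2 * r = 0 := by
  decide +kernel

section Curve

variable {K : Type*} [Field K] [NumberField K] {θ : 𝓞 K}

theorem four_dvd_of_mul_sq_eq (hθ : θ ^ 5 = 2) (hK : Module.finrank ℚ K = 5)
    {p r : ℤ} {d w : localSubring θ} (hd : d = toLocal θ (θ ^ 4 - θ ^ 3 + θ ^ 2 - θ + 1))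
    (h : d * w ^ 2 = toLocal θ θ ^ 4 * p ^ 4 - toLocal θ θ ^ 3 * p ^ 3 * r +
      toLocal θ θ ^ 2 * p ^ 2 * r ^ 2 - toLocal θ θ * p * r ^ 3 + r ^ 4) :
    4 ∣ p - r ∨ 4 ∣ 2 * p ∧ 4 ∣ 2 * r := by
  obtain ⟨b₀, b₁, b₂, b₃, b₄, y, hy⟩ := exists_digits hθ hK w
  have h5 := toLocal_fifth_root hθ
  obtain ⟨c₀, hc₀⟩ : ∃ c : ℤ, c = b₀.toNat ^ 2 + 4 * (b₁.toNat * b₄.toNat + b₂.toNat * b₃.toNat) :=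
    ⟨_, rfl⟩
  obtain ⟨c₁, hc₁⟩ : ∃ c : ℤ, c = 2 * (b₀.toNat * b₁.toNat) +
    2 * (b₃.toNat ^ 2 + 2 * (b₂.toNat * b₄.toNat)) := ⟨_, rfl⟩
  obtain ⟨c₂, hc₂⟩ : ∃ c : ℤ, c = b₁.toNat ^ 2 + 2 * (b₀.toNat * b₂.toNat) +
    4 * (b₃.toNat * b₄.toNat) := ⟨_, rfl⟩
  obtain ⟨c₃, hc₃⟩ : ∃ c : ℤ, c = 2 * (b₀.toNat * b₃.toNat + b₁.toNat * b₂.toNat) +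
    2 * b₄.toNat ^ 2 := ⟨_, rfl⟩
  obtain ⟨c₄, hc₄⟩ : ∃ c : ℤ, c = b₂.toNat ^ 2 +
    2 * (b₀.toNat * b₄.toNat + b₁.toNat * b₃.toNat) := ⟨_, rfl⟩
  obtain ⟨a, ha⟩ : ∃ a : localSubring θ, a = b₀.toNat + b₁.toNat * toLocal θ θ +
    b₂.toNat * toLocal θ θ ^ 2 + b₃.toNat * toLocal θ θ ^ 3 + b₄.toNat * toLocal θ θ ^ 4 := ⟨_, rfl⟩
  have ha2 : a ^ 2 = c₀ + c₁ * toLocal θ θ + c₂ * toLocal θ θ ^ 2 + c₃ * toLocal θ θ ^ 3 +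
      c₄ * toLocal θ θ ^ 4 := by
    rw [ha, hc₀, hc₁, hc₂, hc₃, hc₄]
    push_cast
    linear_combination (2 * b₁.toNat * b₄.toNat + 2 * b₂.toNat * b₃.toNat +
      (2 * b₂.toNat * b₄.toNat + b₃.toNat ^ 2) * toLocal θ θ +
      2 * b₃.toNat * b₄.toNat * toLocal θ θ ^ 2 + b₄.toNat ^ 2 * toLocal θ θ ^ 3) * h5
  obtain ⟨c, hc⟩ : ∃ c : Fin 5 → ℤ, c = ![2 * c₁ - 2 * c₂ + 2 * c₃ - 2 * c₄ + c₀ - r ^ 4,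
    2 * c₂ - 2 * c₃ + 2 * c₄ - c₀ + c₁ + p * r ^ 3,
    2 * c₃ - 2 * c₄ + c₀ - c₁ + c₂ - p ^ 2 * r ^ 2,
    2 * c₄ - c₀ + c₁ - c₂ + c₃ + p ^ 3 * r,
    c₀ - c₁ + c₂ - c₃ + c₄ - p ^ 4] := ⟨_, rfl⟩
  have hdvd : toLocal θ θ ^ 10 ∣ toLocal θ (quintic θ c) := by
    refine ⟨-d * (a * y + y ^ 2), ?_⟩
    rw [hy, ← ha] at h
    rw [show toLocal θ θ ^ 10 = (toLocal θ θ ^ 5) ^ 2 by ring, h5]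
    have hdp : d = toLocal θ θ ^ 4 - toLocal θ θ ^ 3 + toLocal θ θ ^ 2 - toLocal θ θ + 1 := by
      simp [hd]
    have h2 : toLocal θ 2 = 2 := map_ofNat _ 2
    simp [quintic, hc, h2]
    linear_combination h - d * ha2 - (c₀ + c₁ * toLocal θ θ + c₂ * toLocal θ θ ^ 2 + c₃ *
        toLocal θ θ ^ 3 +
      c₄ * toLocal θ θ ^ 4) * hdp - (c₁ - c₂ + c₃ - c₄ + (c₂ - c₃ + c₄) * toLocal θ θ +
        (c₃ - c₄) * toLocal θ θ ^ 2 + c₄ * toLocal θ θ ^ 3) * h5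
  have hdvd4 (i : Fin 5) : ((c i : ℤ) : ZMod 4) = 0 := by
    refine (ZMod.intCast_zmod_eq_zero_iff_dvd _ 4).2 (dvd_of_intCast_dvd_quintic hθ hK ?_ i)
    have := pow_dvd_of_toLocal_dvd hdvd
    rw [show θ ^ 10 = (θ ^ 5) ^ 2 by ring, hθ] at this
    convert this
    norm_num
  have := eq_or_two_mul_eq_zero_of_quintic_eq b₀ b₁ b₂ b₃ b₄ p r
    (by simpa [hc, hc₀, hc₁, hc₂, hc₃, hc₄] using hdvd4 0)
    (by simpa [hc, hc₀, hc₁, hc₂, hc₃, hc₄] using hdvd4 1)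
    (by simpa [hc, hc₀, hc₁, hc₂, hc₃, hc₄] using hdvd4 2)
    (by simpa [hc, hc₀, hc₁, hc₂, hc₃, hc₄] using hdvd4 3)
    (by simpa [hc, hc₀, hc₁, hc₂, hc₃, hc₄] using hdvd4 4)
  have key (n : ℤ) : (n : ZMod 4) = 0 ↔ 4 ∣ n := ZMod.intCast_zmod_eq_zero_iff_dvd n 4
  rw [← key, ← key, ← key]
  push_cast
  exact this

theorem isUnit_intCast_of_odd (hθ : θ ^ 5 = 2) (hK : Module.finrank ℚ K = 5) {n : ℤ}
    (hn : Odd n) : IsUnit (n : localSubring θ) := by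
  obtain ⟨m, rfl⟩ := hn
  refine isUnit_of_isUnit_add_mul hθ hK isUnit_one (z := toLocal θ θ ^ 4 * m) ?_
  push_cast
  rw [← toLocal_fifth_root hθ]
  ring

theorem eq_of_mul_sq_eq (hθ : θ ^ 5 = 2) (hK : Module.finrank ℚ K = 5)
    {p r : ℤ} (hpr : IsCoprime p r) {d w : localSubring θ}
    (hd : d = toLocal θ (θ ^ 4 - θ ^ 3 + θ ^ 2 - θ + 1))
    (h : d * w ^ 2 = toLocal θ θ ^ 4 * p ^ 4 - toLocal θ θ ^ 3 * p ^ 3 * r +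
      toLocal θ θ ^ 2 * p ^ 2 * r ^ 2 - toLocal θ θ * p * r ^ 3 + r ^ 4) : p = r := by
  have hnot : ¬ (2 ∣ p ∧ 2 ∣ r) := fun ⟨hp, hr⟩ => by
    have := hpr.isUnit_of_dvd' hp hr
    norm_num [Int.isUnit_iff] at this
  have h4 : 4 ∣ p - r := (four_dvd_of_mul_sq_eq hθ hK hd h).resolve_right (by omega)
  have hr : Odd r := by
    rw [← Int.not_even_iff_odd, even_iff_two_dvd]
    omega
  by_contra hne
  obtain ⟨q, hq⟩ := h4
  have hq0 : q ≠ 0 := by omega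
  obtain ⟨m, hqm, hm⟩ := (Int.finiteMultiplicity_iff.2 ⟨by norm_num, hq0⟩ :
    FiniteMultiplicity 2 q).exists_eq_pow_mul_and_not_dvd
  generalize multiplicity 2 q = j at hqm
  have hmu := isUnit_intCast_of_odd hθ hK (by
    rwa [← Int.not_even_iff_odd, even_iff_two_dvd] : Odd m)
  obtain ⟨i, hi⟩ := (isUnit_intCast_of_odd hθ hK hr).exists_right_inv
  have hpq : (p : localSubring θ) = r + 4 * (2 ^ j * m) := by
    have : p = r + 4 * (2 ^ j * m) := by rw [← hqm, ← hq]; ring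
    exact_mod_cast congrArg (Int.cast (R := localSubring θ)) this
  refine mul_sq_ne_of_eq_one_add hθ hK (x := p * i) (w := w * i ^ 2) hd j
    (hmu.mul (IsUnit.of_mul_eq_one_right _ hi)) ?_ ?_
  · rw [hpq]
    linear_combination hi
  · linear_combination i ^ 4 * h + (-toLocal θ θ ^ 3 * p ^ 3 * i ^ 3 +
      toLocal θ θ ^ 2 * p ^ 2 * i ^ 2 * (r * i + 1) -
      toLocal θ θ * p * i * (r ^ 2 * i ^ 2 + r * i + 1) +
      (r * i + 1) * (r ^ 2 * i ^ 2 + 1)) * hi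

theorem rat_eq_one_of_mul_sq_eq (hθ : θ ^ 5 = 2) (hK : Module.finrank ℚ K = 5) {X : ℚ} {Y : K}
    (h : (θ : K) ^ 4 * X ^ 4 - θ ^ 3 * X ^ 3 + θ ^ 2 * X ^ 2 - θ * X + 1 =
      (θ ^ 4 - θ ^ 3 + θ ^ 2 - θ + 1) * Y ^ 2) : X = 1 := by
  have hnum : (X : K) * X.den = X.num := by exact_mod_cast Rat.mul_den_eq_num X
  obtain ⟨d, hd⟩ : ∃ d, d = toLocal θ (θ ^ 4 - θ ^ 3 + θ ^ 2 - θ + 1) := ⟨_, rfl⟩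
  have hdK : (d : K) = θ ^ 4 - θ ^ 3 + θ ^ 2 - θ + 1 := by simp [hd]
  have hdu : IsUnit d := isUnit_of_isUnit_add_mul hθ hK isUnit_one
    (z := toLocal θ (θ ^ 3 - θ ^ 2 + θ - 1)) (by
      rw [hd, ← map_mul, ← map_one (toLocal θ), ← map_add]
      ring_nf)
  obtain ⟨i, hi⟩ := hdu.exists_right_inv
  have hiK : (d : K) * i = 1 := congrArg Subtype.val hi
  obtain ⟨f, hf⟩ : ∃ f : localSubring θ, f = toLocal θ θ ^ 4 * (X.num : localSubring θ) ^ 4 -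
      toLocal θ θ ^ 3 * (X.num : localSubring θ) ^ 3 * (X.den : ℤ) +
      toLocal θ θ ^ 2 * (X.num : localSubring θ) ^ 2 * (X.den : ℤ) ^ 2 -
      toLocal θ θ * (X.num : localSubring θ) * (X.den : ℤ) ^ 3 + (X.den : ℤ) ^ 4 := ⟨_, rfl⟩
  have hfK : d * (Y * X.den ^ 2) ^ 2 = f := by
    rw [hf]
    push_cast
    rw [coe_toLocal, ← hnum, hdK]
    linear_combination -X.den ^ 4 * h
  obtain ⟨w, hw⟩ : ∃ w : localSubring θ, (w : K) = Y * X.den ^ 2 :=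
    ⟨⟨_, mem_localSubring_of_sq_add hθ hK 0 (-(i * f)) (by
      push_cast
      linear_combination i * hfK - (Y * X.den ^ 2) ^ 2 * hiK)⟩, rfl⟩
  have := eq_of_mul_sq_eq hθ hK (p := X.num) (r := X.den) (w := w) (Rat.isCoprime_num_den X) hd
    (hf ▸ Subtype.ext (by
      push_cast
      rw [hw]
      exact hfK))
  rw [← Rat.num_div_den X, this]
  exact div_self (by exact_mod_cast X.den_ne_zero)

end Curve

/-- Lemma 5 (second curve) of the paper: with `α = ⁵√2` and `K = ℚ(α) ⊆ ℝ`, the only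
solutions of `α⁴X⁴ - α³X³ + α²X² - αX + 1 = (α⁴-α³+α²-α+1)Y²` with `X ∈ ℚ` and
`Y ∈ K` are `(X,Y) = (1, ±1)`. -/
theorem chabauty_curve_C2 (α : ℝ) (hα : α ^ 5 = 2) (hαpos : 0 < α)
    (X : ℚ) (Y : ℝ) (hY : Y ∈ IntermediateField.adjoin ℚ ({α} : Set ℝ)) :
    α ^ 4 * (X : ℝ) ^ 4 - α ^ 3 * (X : ℝ) ^ 3 + α ^ 2 * (X : ℝ) ^ 2 - α * (X : ℝ) + 1
        = (α ^ 4 - α ^ 3 + α ^ 2 - α + 1) * Y ^ 2 ↔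
      (X = 1 ∧ (Y = 1 ∨ Y = -1)) := by
  have hδ : α ^ 4 - α ^ 3 + α ^ 2 - α + 1 ≠ 0 := by
    have : (α + 1) * (α ^ 4 - α ^ 3 + α ^ 2 - α + 1) = 3 := by linear_combination hα
    exact right_ne_zero_of_mul (this.trans_ne (by norm_num))
  constructor
  · intro h
    have hint : IsIntegral ℚ α := .of_pow (n := 5) (by norm_num) (by
      rw [hα]
      exact isIntegral_algebraMap (R := ℚ) (x := 2))
    let K := IntermediateField.adjoin ℚ ({α} : Set ℝ)
    have := IntermediateField.adjoin.finiteDimensional hint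
    have : NumberField K := ⟨⟩
    have hK : Module.finrank ℚ K = 5 := by
      rw [IntermediateField.adjoin.finrank hint, minpoly_fifth_root hα]
      exact natDegree_X_pow_sub_C
    let a : K := ⟨α, IntermediateField.mem_adjoin_simple_self ℚ α⟩
    have ha : a ^ 5 = 2 := Subtype.ext hα
    let θ : 𝓞 K := ⟨a, isIntegral_fifth_root ha⟩
    have hθ : θ ^ 5 = 2 := RingOfIntegers.ext ha
    have hX : X = 1 := rat_eq_one_of_mul_sq_eq hθ hK (Y := (⟨Y, hY⟩ : K)) (Subtype.ext h)
    subst hX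
    refine ⟨rfl, sq_eq_one_iff.1 ?_⟩
    exact mul_left_cancel₀ hδ (by rw [← h]; push_cast; ring)
  · rintro ⟨rfl, rfl | rfl⟩ <;> push_cast <;> ring
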